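/- arXiv:2410.22531 — 12 statements merged into one kernel-verified Lean document; each statement's English description precedes it below -/
import Mathlib

section
/- Let K ⊆ L be a finite extension of fields of characteristic zero, and let A and B be nonzero K-linear subspaces of L. Let AB denote the K-linear span of the set of products {ab : a ∈ A, b ∈ B}, and let Stab(AB) := {x ∈ L : x·(AB) ⊆ AB}. Then dim_K(AB) ≥ dim_K(A) + dim_K(B) − dim_K(Stab(AB)). -/
open Module

/-- The stabilizer of a `K`-subspace `C` of `L`: elements `x ∈ L` with `x • C ⊆ C`. -/
def mulStab {K L : Type*} [Field K] [Field L] [Algebra K L] (C : Submodule K L) :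
    Submodule K L where
  carrier := {x : L | ∀ c ∈ C, x * c ∈ C}
  add_mem' := by
    intro a b ha hb c hc
    simpa [add_mul] using C.add_mem (ha c hc) (hb c hc)
  zero_mem' := by
    intro c hc
    simpa using C.zero_mem
  smul_mem' := by
    intro r x hx c hc
    simpa [smul_mul_assoc] using C.smul_mem r (hx c hc)

/-!
For `1 ∈ A`, Dyson's transform `A ↦ A ∩ s⁻¹B`, `B ↦ B + sA` with `s ∈ B` preserves `dim A + dim B`
and does not enlarge `AB`; it strictly shrinks `A` unless `A` already stabilizes `B`. Iterating it
yields `B ⊆ V ⊆ AB` with `dim A + dim B ≤ dim V + dim (Stab V)`. Applied to `a⁻¹A` and `B` for each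
nonzero `a ∈ A`, this gives a field `H = Stab V`, depending on `a`, with `aHB ⊆ AB` and
`dim A + dim B ≤ dim AB + dim H`. For fixed `H` the `a` with `aHB ⊆ AB` form a subspace. By
the primitive element theorem only finitely many `H` occur, and `K` is infinite, so one of these
subspaces contains all of `A`; for that `H` we get `H·AB ⊆ AB`, that is, `H ⊆ Stab(AB)`.
-/

section

open scoped Pointwise

section PointwiseSMul

variable {K G M : Type*} [GroupWithZero G] [AddCommGroup M] [DistribMulAction G M] {s : G}

lemma smul_inf_inv_smul [Ring K] [Module K M] [SMulCommClass G K M] (hs : s ≠ 0)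
    (A B : Submodule K M) : s • (A ⊓ s⁻¹ • B) = s • A ⊓ B :=
  calc s • (A ⊓ s⁻¹ • B) = s • A ⊓ s • s⁻¹ • B :=
        Submodule.map_inf (DistribSMul.toLinearMap K M s)
          (MulAction.injective (Units.mk0 s hs) : Function.Injective (s • · : M → M))
    _ = s • A ⊓ B := by rw [smul_inv_smul₀ hs]

lemma finrank_smul_submodule [Ring K] [Module K M] [SMulCommClass G K M] (hs : s ≠ 0)
    (A : Submodule K M) : finrank K ↥(s • A) = finrank K A :=
  (DistribMulAction.toLinearEquiv K M (Units.mk0 s hs)).finrank_map_eq A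

instance finite_smul_submodule [Ring K] [Module K M] [SMulCommClass G K M]
    (s : G) (A : Submodule K M) [Module.Finite K A] : Module.Finite K ↥(s • A) :=
  Module.Finite.map A (DistribSMul.toLinearMap K M s)

lemma finrank_inf_inv_smul_add_finrank_sup_smul [DivisionRing K] [Module K M]
    [SMulCommClass G K M] (hs : s ≠ 0) (A B : Submodule K M) [FiniteDimensional K A]
    [FiniteDimensional K B] :
    finrank K ↥(A ⊓ s⁻¹ • B) + finrank K ↥(B ⊔ s • A) = finrank K A + finrank K B := by
  rw [← finrank_smul_submodule hs (A ⊓ s⁻¹ • B), smul_inf_inv_smul hs, sup_comm, add_comm,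
    Submodule.finrank_sup_add_finrank_inf_eq, finrank_smul_submodule hs]

end PointwiseSMul

lemma exists_le_of_forall_exists_mem {K M ι : Type*} [DivisionRing K] [Infinite K]
    [AddCommGroup M] [Module K M] [Finite ι] {A : Submodule K M} {W : ι → Submodule K M}
    (h : ∀ a ∈ A, ∃ i, a ∈ W i) : ∃ i, A ≤ W i := by
  have hcover : ⋃ i, ((W i).comap A.subtype : Set A) = Set.univ :=
    Set.eq_univ_of_forall fun a ↦ Set.mem_iUnion.2 (h a a.2)
  obtain ⟨i, hi⟩ := Subspace.exists_eq_top_of_iUnion_eq_univ hcover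
  exact ⟨i, Submodule.comap_subtype_eq_top.1 hi⟩

instance finite_mul_submodule {R A : Type*} [CommSemiring R] [Semiring A] [Algebra R A]
    (M N : Submodule R A) [Module.Finite R M] [Module.Finite R N] : Module.Finite R ↥(M * N) :=
  Module.Finite.iff_fg.2 <|
    (Module.Finite.iff_fg.1 ‹Module.Finite R M›).mul (Module.Finite.iff_fg.1 ‹Module.Finite R N›)

variable {K L : Type*} [Field K] [Field L] [Algebra K L]

lemma inf_inv_smul_mul_sup_smul_le {s : L} (hs : s ≠ 0) (A B : Submodule K L) :
    (A ⊓ s⁻¹ • B) * (B ⊔ s • A) ≤ A * B := by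
  rw [Submodule.mul_sup]
  refine sup_le (mul_le_mul_left inf_le_left B) ?_
  calc (A ⊓ s⁻¹ • B) * s • A = (s • A ⊓ B) * A := by
        rw [mul_smul_comm, ← smul_mul_assoc, smul_inf_inv_smul hs]
    _ ≤ B * A := mul_le_mul_left inf_le_right A
    _ = A * B := mul_comm B A

lemma mulStab_eq_div (C : Submodule K L) : mulStab C = C / C := rfl

lemma le_mulStab_iff_mul_le {C D : Submodule K L} : D ≤ mulStab C ↔ D * C ≤ C := by
  rw [mulStab_eq_div, Submodule.le_div_iff_mul_le]

lemma finiteDimensional_mulStab {C : Submodule K L} [FiniteDimensional K C] (hC : C ≠ ⊥) :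
    FiniteDimensional K (mulStab C) := by
  obtain ⟨c, hc, hc0⟩ := C.exists_mem_ne_zero_of_ne_bot hC
  have hle : mulStab C ≤ c⁻¹ • C := fun x hx ↦ by
    simpa only [smul_eq_mul, mul_comm x, inv_mul_cancel_left₀ hc0]
      using Submodule.smul_mem_pointwise_smul _ c⁻¹ C (hx c hc)
  exact Submodule.finiteDimensional_of_le hle

/-- The stabilizer of a `K`-subspace of `L` bundled as a subalgebra, hence as one of the
intermediate fields of `L/K` when it is finite-dimensional. -/
def mulStabSubalgebra (C : Submodule K L) : Subalgebra K L :=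
  (mulStab C).toSubalgebra (fun c hc ↦ by rwa [one_mul])
    fun x y hx hy c hc ↦ by rw [mul_assoc]; exact hx _ (hy c hc)

lemma toSubmodule_mulStabSubalgebra (C : Submodule K L) :
    (mulStabSubalgebra C).toSubmodule = mulStab C :=
  Submodule.toSubalgebra_toSubmodule _ _ _

lemma exists_inf_inv_smul_lt {A B : Submodule K L} (hA : 1 ∈ A) (hAB : ¬A ≤ mulStab B) :
    ∃ s : L, s ≠ 0 ∧ 1 ∈ A ⊓ s⁻¹ • B ∧ A ⊓ s⁻¹ • B < A := by
  obtain ⟨x, hx, s, hs, hxs⟩ : ∃ x ∈ A, ∃ s ∈ B, x * s ∉ B := by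
    simpa only [mulStab_eq_div, Submodule.le_div_iff, not_forall, exists_prop] using hAB
  have hs0 : s ≠ 0 := by
    rintro rfl
    exact hxs (by rw [mul_zero]; exact B.zero_mem)
  have mem_iff (y : L) : y ∈ s⁻¹ • B ↔ y * s ∈ B := by
    rw [mul_comm]
    exact Set.mem_inv_smul_set_iff₀ hs0 (B : Set L) y
  exact ⟨s, hs0, ⟨hA, (mem_iff 1).2 (by rwa [one_mul])⟩,
    inf_lt_left.2 fun hle ↦ hxs ((mem_iff x).1 (hle hx))⟩

lemma exists_between_finrank_add_finrank_le (A B : Submodule K L)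
    [FiniteDimensional K A] [FiniteDimensional K B] (hA : 1 ∈ A) (hB : B ≠ ⊥) :
    ∃ V : Submodule K L, B ≤ V ∧ V ≤ A * B ∧
      finrank K A + finrank K B ≤ finrank K V + finrank K (mulStab V) := by
  induction hn : finrank K A using Nat.strong_induction_on generalizing A B with
  | _ n ih =>
  subst hn
  by_cases hAB : A ≤ mulStab B
  · have := finiteDimensional_mulStab hB
    have hBA : B ≤ A * B := le_mul_of_one_le_left' (Submodule.one_le.2 hA)
    exact ⟨B, le_rfl, hBA, by linarith [Submodule.finrank_mono hAB]⟩
  · obtain ⟨s, hs, hone, hlt⟩ := exists_inf_inv_smul_lt hA hAB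
    obtain ⟨V, hBV, hVAB, hV⟩ := ih _ (Submodule.finrank_lt_finrank_of_lt hlt)
      (A ⊓ s⁻¹ • B) (B ⊔ s • A) hone (ne_bot_of_le_ne_bot hB le_sup_left) rfl
    rw [finrank_inf_inv_smul_add_finrank_sup_smul hs] at hV
    exact ⟨V, le_sup_left.trans hBV, hVAB.trans (inf_inv_smul_mul_sup_smul_le hs A B), hV⟩

lemma exists_subalgebra_finrank_add_finrank_le (A B : Submodule K L)
    [FiniteDimensional K A] [FiniteDimensional K B] (hB : B ≠ ⊥) {a : L} (ha : a ∈ A)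
    (ha0 : a ≠ 0) :
    ∃ H : Subalgebra K L, FiniteDimensional K H ∧ a ∈ A * B / (H.toSubmodule * B) ∧
      finrank K A + finrank K B ≤ finrank K ↥(A * B) + finrank K H := by
  have hone : 1 ∈ a⁻¹ • A := by
    simpa only [smul_eq_mul, inv_mul_cancel₀ ha0] using Submodule.smul_mem_pointwise_smul a a⁻¹ A ha
  obtain ⟨V, hBV, hVAB, hV⟩ := exists_between_finrank_add_finrank_le (a⁻¹ • A) B hone hB
  have haV : a • V ≤ A * B :=
    calc a • V ≤ a • (a⁻¹ • A * B) := Submodule.map_mono hVAB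
      _ = A * B := by rw [← smul_mul_assoc, smul_inv_smul₀ ha0]
  have : FiniteDimensional K V := Submodule.finiteDimensional_of_le hVAB
  refine ⟨mulStabSubalgebra V, finiteDimensional_mulStab (ne_bot_of_le_ne_bot hB hBV), ?_, ?_⟩
  · have hHB : mulStab V * B ≤ V :=
      (mul_le_mul_right hBV _).trans (le_mulStab_iff_mul_le.1 le_rfl)
    rw [toSubmodule_mulStabSubalgebra, Submodule.mem_div_iff_forall_mul_mem]
    exact fun y hy ↦ haV (Submodule.smul_mem_pointwise_smul y a V (hHB hy))
  · rw [← Subalgebra.finrank_toSubmodule, toSubmodule_mulStabSubalgebra]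
    rw [finrank_smul_submodule (inv_ne_zero ha0)] at hV
    calc finrank K A + finrank K B
        ≤ finrank K V + finrank K (mulStab V) := hV
      _ = finrank K ↥(a • V) + finrank K (mulStab V) := by rw [finrank_smul_submodule ha0]
      _ ≤ finrank K ↥(A * B) + finrank K (mulStab V) :=
        Nat.add_le_add_right (Submodule.finrank_mono haV) _

end

lemma finite_subalgebra_of_isSeparable (K L : Type*) [Field K] [Field L] [Algebra K L]
    [FiniteDimensional K L] [Algebra.IsSeparable K L] : Finite (Subalgebra K L) :=
  have := Field.finite_intermediateField_of_exists_primitive_element K L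
    (Field.exists_primitive_element K L)
  Finite.of_equiv _ (subalgebraEquivIntermediateField (K := K) (L := L)).symm.toEquiv

theorem stmt0_general {K L : Type*} [Field K] [Infinite K] [Field L] [Algebra K L]
    (hfin : {F : Subalgebra K L | FiniteDimensional K F}.Finite) (A B : Submodule K L)
    [FiniteDimensional K A] [FiniteDimensional K B] (hA : A ≠ ⊥) (hB : B ≠ ⊥) :
    finrank K A + finrank K B ≤
      finrank K (A * B : Submodule K L) + finrank K (mulStab (A * B)) := by
  let S : Set (Subalgebra K L) := {H | FiniteDimensional K H ∧
    finrank K A + finrank K B ≤ finrank K ↥(A * B) + finrank K H}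
  have : Finite S := hfin.subset fun H hH ↦ hH.1
  have hcover_ne_zero (a : L) (ha : a ∈ A) (ha0 : a ≠ 0) :
      ∃ H : S, a ∈ A * B / (H.1.toSubmodule * B) := by
    obtain ⟨H, hH, haH, hdim⟩ := exists_subalgebra_finrank_add_finrank_le A B hB ha ha0
    exact ⟨⟨H, hH, hdim⟩, haH⟩
  have hcover (a : L) (ha : a ∈ A) : ∃ H : S, a ∈ A * B / (H.1.toSubmodule * B) := by
    obtain rfl | ha0 := eq_or_ne a 0
    · obtain ⟨a, ha, ha0⟩ := A.exists_mem_ne_zero_of_ne_bot hA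
      exact (hcover_ne_zero a ha ha0).imp fun _ _ ↦ Submodule.zero_mem _
    · exact hcover_ne_zero a ha ha0
  obtain ⟨⟨H, _, hdim⟩, hAH⟩ := exists_le_of_forall_exists_mem hcover
  have hHstab : H.toSubmodule ≤ mulStab (A * B) := by
    rwa [le_mulStab_iff_mul_le, mul_left_comm, ← Submodule.le_div_iff_mul_le]
  have hAB : A * B ≠ ⊥ := mul_ne_zero hA hB
  have := finiteDimensional_mulStab hAB
  exact hdim.trans (Nat.add_le_add_left (Submodule.finrank_mono hHstab) _)

/-- Hou–Leung–Xiang: for nonzero `K`-subspaces `A, B` of a finite extension `L/K` in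
characteristic zero, `dim (A*B) ≥ dim A + dim B - dim Stab(A*B)`. -/
theorem stmt0 {K L : Type*} [Field K] [Field L] [Algebra K L] [FiniteDimensional K L]
    [CharZero K] (A B : Submodule K L) (hA : A ≠ ⊥) (hB : B ≠ ⊥) :
    finrank K A + finrank K B ≤
      finrank K (A * B : Submodule K L) + finrank K (mulStab (A * B)) := by
  have := finite_subalgebra_of_isSeparable K L
  exact stmt0_general (Set.toFinite _) A B hA hB
end

section
/- Let K ⊆ L be a finite extension of fields and let C be a nonzero K-linear subspace of L. Then the stabilizer Stab(C) := {x ∈ L : x·c ∈ C for all c ∈ C} is a subfield of L containing (the image of) K; that is, Stab(C) contains 1 and all scalars from K, is closed under addition and multiplication, and contains the inverse of each of its nonzero elements, so it is the underlying set of an intermediate field of the extension L/K. -/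
section Subalgebra

variable {R M : Type*} (A : Type*) [CommSemiring R] [Semiring A] [Algebra R A]
  [AddCommMonoid M] [Module R M] [Module A M] [IsScalarTower R A M]

/-- The stabilizer `Stab(C) = {x ∈ A : x • C ⊆ C}` of an `R`-submodule `C` of an `A`-module, as an
`R`-subalgebra of `A`. Unlike in `MulAction.stabilizer`, the inclusion `x • C ⊆ C` may be strict. -/
def stabilizerSubalgebra (C : Submodule R M) : Subalgebra R A where
  carrier := {x | ∀ c ∈ C, x • c ∈ C}
  mul_mem' {x y} hx hy c hc := by
    rw [mul_smul]
    exact hx _ (hy c hc)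
  add_mem' {x y} hx hy c hc := by
    rw [add_smul]
    exact C.add_mem (hx c hc) (hy c hc)
  algebraMap_mem' r c hc := by
    rw [algebraMap_smul]
    exact C.smul_mem r hc

end Subalgebra

section IntermediateField

variable {K V : Type*} (L : Type*) [Field K] [Field L] [Algebra K L] [Algebra.IsAlgebraic K L]
  [AddCommGroup V] [Module K V] [Module L V] [IsScalarTower K L V]

/-- The stabilizer of a `K`-subspace of an `L`-vector space, as an intermediate field of an
algebraic extension `L/K`. It is closed under inversion because `x⁻¹ ∈ K[x]` for algebraic `x`. -/
def stabilizerIntermediateField (C : Submodule K V) : IntermediateField K L :=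
  Subalgebra.IsAlgebraic.toIntermediateField (S := stabilizerSubalgebra L C)
    fun x _ ↦ Algebra.IsAlgebraic.isAlgebraic x

theorem coe_stabilizerIntermediateField (C : Submodule K V) :
    (stabilizerIntermediateField L C : Set L) = {x : L | ∀ c ∈ C, x • c ∈ C} :=
  rfl

end IntermediateField

theorem stmt1_general {K L V : Type*} [Field K] [Field L] [Algebra K L] [Algebra.IsAlgebraic K L]
    [AddCommGroup V] [Module K V] [Module L V] [IsScalarTower K L V] (C : Submodule K V) :
    ∃ F : IntermediateField K L, (F : Set L) = {x : L | ∀ c ∈ C, x • c ∈ C} :=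
  ⟨stabilizerIntermediateField L C, coe_stabilizerIntermediateField L C⟩

/-- For a nonzero `K`-subspace `C` of a finite field extension `L/K`, the stabilizer
`Stab(C) = {x ∈ L : x·C ⊆ C}` is the underlying set of an intermediate field of `L/K`. -/
theorem stmt1 {K L : Type*} [Field K] [Field L] [Algebra K L] [FiniteDimensional K L]
    (C : Submodule K L) (hC : C ≠ ⊥) :
    ∃ F : IntermediateField K L, (F : Set L) = {x : L | ∀ c ∈ C, x * c ∈ C} :=
  stmt1_general C
end

section
/- Let K ⊆ L be a finite extension of fields of characteristic zero, and assume the extension has no proper intermediate fields: every intermediate field F with K ⊆ F ⊆ L satisfies F = K or F = L. Then for any nonzero K-linear subspaces A and B of L, either AB = L (the span of the products is all of L), or dim_K(AB) ≥ dim_K(A) + dim_K(B) − 1. -/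
open Module

/-!
For a unit `e`, the linear Dyson transform replaces `(A, B)` by `(A ⊔ e⁻¹ • B, B ⊓ e • A)`. It
preserves the sum of the dimensions and does not enlarge the product, so as long as some `e` makes
`B ⊓ e • A` nonzero and smaller than `B` we can descend on `dim B`. When no such `e` is left,
`A * B = a • A` for every nonzero `a ∈ B`, so `a⁻¹ • B` stabilizes `V = A * B`. Hence in general
`A * B` contains a nonzero `V` with `dim A + dim B ≤ dim V + dim (stabilizer V)`. The stabilizer is
a finite-dimensional field: if it is `K` this is the bound, and if it is `L` then `V = L`.
-/

open scoped Pointwise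

section PointwiseSMul

variable {α R M : Type*} [Monoid α] [Semiring R] [AddCommMonoid M] [Module R M]
  [DistribMulAction α M] [SMulCommClass α R M]

theorem units_smul_inf (u : αˣ) (N P : Submodule R M) : u • (N ⊓ P) = u • N ⊓ u • P :=
  SetLike.coe_injective (Set.smul_set_inter (a := u))

instance finite_units_smul (u : αˣ) (N : Submodule R M) [Module.Finite R N] :
    Module.Finite R (u • N : Submodule R M) :=
  Module.Finite.map N (DistribSMul.toLinearMap R M (u : α))

theorem finrank_units_smul (u : αˣ) (N : Submodule R M) :
    finrank R (u • N : Submodule R M) = finrank R N :=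
  (DistribMulAction.toLinearEquiv R M u).finrank_map_eq N

end PointwiseSMul

theorem finrank_sup_inv_smul_add_finrank_inf_smul {α K M : Type*} [Monoid α] [DivisionRing K]
    [AddCommGroup M] [Module K M] [DistribMulAction α M] [SMulCommClass α K M]
    (u : αˣ) (N P : Submodule K M) [FiniteDimensional K N] [FiniteDimensional K P] :
    finrank K (N ⊔ u⁻¹ • P : Submodule K M) + finrank K (P ⊓ u • N : Submodule K M) =
      finrank K N + finrank K P := by
  have h_inf : u⁻¹ • (P ⊓ u • N) = N ⊓ u⁻¹ • P := by
    rw [units_smul_inf, inv_smul_smul, inf_comm]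
  rw [← finrank_units_smul u⁻¹ (P ⊓ u • N), h_inf,
    Submodule.finrank_sup_add_finrank_inf_eq, finrank_units_smul]

section CommSemiring

variable {R S : Type*} [CommSemiring R] [CommSemiring S] [Algebra R S]

theorem sup_inv_smul_mul_inf_smul_le (e : Sˣ) (A B : Submodule R S) :
    (A ⊔ e⁻¹ • B) * (B ⊓ e • A) ≤ A * B := by
  rw [Submodule.sup_mul]
  refine sup_le (mul_le_mul' le_rfl inf_le_left) ?_
  calc (e⁻¹ • B) * (B ⊓ e • A) ≤ (e⁻¹ • B) * (e • A) := mul_le_mul' le_rfl inf_le_right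
    _ = A * B := by rw [smul_mul_smul_comm, inv_mul_cancel, one_smul, mul_comm]

/-- The subalgebra of all `x` with `x * V ⊆ V`, for a submodule `V` of a commutative algebra. It
is encoded as the colon submodule `V / V`. -/
def mulStabilizer (V : Submodule R S) : Subalgebra R S :=
  (V / V).toSubalgebra (Submodule.one_mem_div.2 le_rfl) fun x y hx hy => by
    rw [Submodule.mem_div_iff_forall_mul_mem] at hx hy ⊢
    exact fun v hv => mul_assoc x y v ▸ hx _ (hy v hv)

theorem mem_mulStabilizer {V : Submodule R S} {x : S} :
    x ∈ mulStabilizer V ↔ ∀ v ∈ V, x * v ∈ V :=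
  Submodule.mem_div_iff_forall_mul_mem

theorem le_mulStabilizer_iff {V W : Submodule R S} :
    W ≤ (mulStabilizer V).toSubmodule ↔ W * V ≤ V :=
  Submodule.le_div_iff_mul_le

theorem mulStabilizer_le_inv_smul {V : Submodule R S} {v : Sˣ} (hv : (v : S) ∈ V) :
    (mulStabilizer V).toSubmodule ≤ v⁻¹ • V := fun x hx =>
  ⟨x * v, mem_mulStabilizer.1 hx v hv, by
    change (↑v⁻¹ : S) * (x * v) = x
    rw [mul_left_comm, Units.inv_mul, mul_one]⟩

theorem inv_smul_le_mulStabilizer_mul {A B : Submodule R S} {a : Sˣ} (h : A * B = a • A) :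
    a⁻¹ • B ≤ (mulStabilizer (A * B)).toSubmodule :=
  le_mulStabilizer_iff.2 <| le_of_eq <| calc
    (a⁻¹ • B) * (A * B) = (a⁻¹ • B) * (a • A) := by rw [h]
    _ = A * B := by rw [smul_mul_smul_comm, inv_mul_cancel, one_smul, mul_comm]

end CommSemiring

section Semifield

variable {R L : Type*} [CommSemiring R] [Semifield L] [Algebra R L]

theorem mul_eq_smul_of_forall_inf_smul {A B : Submodule R L}
    (h : ∀ e : Lˣ, B ⊓ e • A = ⊥ ∨ B ≤ e • A) {a : Lˣ} (ha : (a : L) ∈ B) :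
    A * B = a • A := by
  refine le_antisymm (Submodule.mul_le.2 fun c hc b hb => ?_) ?_
  · obtain rfl | hc0 := eq_or_ne c 0
    · exact (zero_mul b).symm ▸ zero_mem _
    lift c to Lˣ using hc0.isUnit
    have ha_mem : (a : L) ∈ (a * c⁻¹) • A :=
      ⟨c, hc, congrArg Units.val (inv_mul_cancel_right a c)⟩
    have hB_le : B ≤ (a * c⁻¹) • A := (h _).resolve_left fun h_bot =>
      a.ne_zero ((Submodule.mem_bot R).1 (h_bot ▸ ⟨ha, ha_mem⟩))
    obtain ⟨d, hd, rfl⟩ := hB_le hb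
    refine ⟨d, hd, ?_⟩
    calc (a : L) * d = c * c⁻¹ * (a * d) := by rw [Units.mul_inv, one_mul]
      _ = c * (a * c⁻¹ * d) := by ring
  · rintro _ ⟨c, hc, rfl⟩
    change (a : L) * c ∈ A * B
    exact mul_comm c (a : L) ▸ Submodule.mul_mem_mul hc ha

theorem eq_top_of_mulStabilizer_eq_top {V : Submodule R L} (hV : V ≠ ⊥)
    (h : mulStabilizer V = ⊤) : V = ⊤ := by
  obtain ⟨v, hv, hv0⟩ := Submodule.exists_mem_ne_zero_of_ne_bot hV
  refine Submodule.eq_top_iff'.2 fun x => ?_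
  have hx : x / v ∈ mulStabilizer V := h ▸ Algebra.mem_top
  exact div_mul_cancel₀ x hv0 ▸ mem_mulStabilizer.1 hx v hv

end Semifield

section Field

variable {K L : Type*} [Field K] [Field L] [Algebra K L]

theorem finiteDimensional_mulStabilizer {V : Submodule K L} [FiniteDimensional K V] (hV : V ≠ ⊥) :
    FiniteDimensional K (mulStabilizer V) := by
  obtain ⟨v, hv, hv0⟩ := Submodule.exists_mem_ne_zero_of_ne_bot hV
  lift v to Lˣ using hv0.isUnit
  exact Submodule.finiteDimensional_of_le (mulStabilizer_le_inv_smul hv)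

theorem subalgebra_eq_bot_or_eq_top
    (hprim : ∀ F : IntermediateField K L, FiniteDimensional K F → F = ⊥ ∨ F = ⊤)
    (S : Subalgebra K L) [FiniteDimensional K S] : S = ⊥ ∨ S = ⊤ := by
  let F := Algebra.IsAlgebraic.toIntermediateField S
  exact (hprim F ‹_›).imp (congrArg IntermediateField.toSubalgebra)
    (congrArg IntermediateField.toSubalgebra)

theorem finrank_add_finrank_le_of_mul_eq_smul {A B : Submodule K L} [FiniteDimensional K A]
    {a : Lˣ} (hA : A ≠ ⊥) (h : A * B = a • A) :
    finrank K A + finrank K B ≤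
      finrank K (A * B : Submodule K L) + finrank K (mulStabilizer (A * B)) := by
  have : FiniteDimensional K (A * B : Submodule K L) := by rw [h]; infer_instance
  have hAB : A * B ≠ ⊥ := h ▸ (smul_ne_zero_iff_ne a).2 hA
  have := finiteDimensional_mulStabilizer hAB
  calc finrank K A + finrank K B
      = finrank K (a • A : Submodule K L) + finrank K (a⁻¹ • B : Submodule K L) := by
        rw [finrank_units_smul, finrank_units_smul]
    _ = finrank K (A * B : Submodule K L) + finrank K (a⁻¹ • B : Submodule K L) := by rw [h]
    _ ≤ finrank K (A * B : Submodule K L) + finrank K (mulStabilizer (A * B)) :=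
        Nat.add_le_add_left (Submodule.finrank_mono (inv_smul_le_mulStabilizer_mul h)) _

theorem exists_le_mul_finrank_add_finrank_le (A B : Submodule K L) [FiniteDimensional K A]
    [FiniteDimensional K B] (hA : A ≠ ⊥) (hB : B ≠ ⊥) :
    ∃ V ≤ A * B, V ≠ ⊥ ∧
      finrank K A + finrank K B ≤ finrank K V + finrank K (mulStabilizer V) := by
  induction hn : finrank K B using Nat.strong_induction_on generalizing A B with
  | _ n ih =>
  subst hn
  by_cases h : ∀ e : Lˣ, B ⊓ e • A = ⊥ ∨ B ≤ e • A
  · obtain ⟨a, ha, ha0⟩ := Submodule.exists_mem_ne_zero_of_ne_bot hB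
    lift a to Lˣ using ha0.isUnit
    exact ⟨A * B, le_rfl, mul_ne_zero hA hB,
      finrank_add_finrank_le_of_mul_eq_smul hA (mul_eq_smul_of_forall_inf_smul h ha)⟩
  · push Not at h
    obtain ⟨e, h_inf, h_not_le⟩ := h
    have h_lt : finrank K (B ⊓ e • A : Submodule K L) < finrank K B :=
      Submodule.finrank_lt_finrank_of_lt (inf_lt_left.2 h_not_le)
    obtain ⟨V, hV_le, hV, h_dim⟩ :=
      ih _ h_lt (A ⊔ e⁻¹ • B) (B ⊓ e • A) (ne_bot_of_le_ne_bot hA le_sup_left) h_inf rfl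
    rw [finrank_sup_inv_smul_add_finrank_inf_smul] at h_dim
    exact ⟨V, hV_le.trans (sup_inv_smul_mul_inf_smul_le e A B), hV, h_dim⟩

theorem stmt2_general
    (hprim : ∀ F : IntermediateField K L, FiniteDimensional K F → F = ⊥ ∨ F = ⊤)
    (A B : Submodule K L) [FiniteDimensional K A] [FiniteDimensional K B]
    (hA : A ≠ ⊥) (hB : B ≠ ⊥) :
    A * B = ⊤ ∨ finrank K A + finrank K B ≤ finrank K (A * B : Submodule K L) + 1 := by
  obtain ⟨V, hV_le, hV, h_dim⟩ := exists_le_mul_finrank_add_finrank_le A B hA hB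
  have : FiniteDimensional K (A * B : Submodule K L) :=
    Module.Finite.iff_fg.2 ((Module.Finite.iff_fg.1 ‹_›).mul (Module.Finite.iff_fg.1 ‹_›))
  have : FiniteDimensional K V := Submodule.finiteDimensional_of_le hV_le
  have := finiteDimensional_mulStabilizer hV
  obtain h_bot | h_top := subalgebra_eq_bot_or_eq_top hprim (mulStabilizer V)
  · right
    rw [h_bot, Subalgebra.finrank_bot] at h_dim
    exact h_dim.trans (Nat.add_le_add_right (Submodule.finrank_mono hV_le) 1)
  · left
    exact top_le_iff.1 (eq_top_of_mulStabilizer_eq_top hV h_top ▸ hV_le)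

end Field

/-- If the finite extension `L/K` (characteristic zero) has no proper intermediate fields,
then for nonzero `K`-subspaces `A, B` of `L`, either `A*B = L` or
`dim (A*B) ≥ dim A + dim B - 1`. -/
theorem stmt2 {K L : Type*} [Field K] [Field L] [Algebra K L] [FiniteDimensional K L]
    [CharZero K] (hprim : ∀ F : IntermediateField K L, F = ⊥ ∨ F = ⊤)
    (A B : Submodule K L) (hA : A ≠ ⊥) (hB : B ≠ ⊥) :
    (A * B : Submodule K L) = ⊤ ∨
      finrank K A + finrank K B ≤ finrank K (A * B : Submodule K L) + 1 :=
  stmt2_general (fun F _ => hprim F) A B hA hB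
end

section
/- Let K be a field, n a natural number, and M an invertible n × n matrix over K. Suppose S and T are finite sets of indices such that M i j = 0 for every i ∈ S and j ∈ T. Then |S| + |T| ≤ n. -/
theorem extend_domRestrict_of_support_subset {n R : Type*} [Zero R] {f : n → R} {U : Set n}
    (hf : Function.support f ⊆ U) : Function.extend Subtype.val (U.domRestrict f) 0 = f := by
  funext j
  by_cases hj : j ∈ U
  · exact Function.extend_val_apply hj
  · exact (Function.extend_val_apply' hj).trans (Function.support_subset_iff'.1 hf j hj).symm

section LinearIndependent

variable {ι n R : Type*} [Semiring R] {v : ι → n → R}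

theorem linearIndependent_domRestrict_of_support_subset {U : Set n}
    (hv : LinearIndependent R v) (hU : ∀ i, Function.support (v i) ⊆ U) :
    LinearIndependent R fun i ↦ U.domRestrict (v i) := by
  have extend_eq :
      Function.ExtendByZero.linearMap R Subtype.val ∘ (fun i ↦ U.domRestrict (v i)) = v :=
    funext fun i ↦ extend_domRestrict_of_support_subset (hU i)
  refine .of_comp (Function.ExtendByZero.linearMap R Subtype.val) ?_
  rwa [extend_eq]

theorem card_le_card_of_linearIndependent_of_support_subset [StrongRankCondition R] [Fintype ι]
    {U : Finset n} (hv : LinearIndependent R v) (hU : ∀ i, Function.support (v i) ⊆ U) :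
    Fintype.card ι ≤ U.card :=
  calc Fintype.card ι
    _ ≤ Module.finrank R (U → R) :=
      (linearIndependent_domRestrict_of_support_subset hv hU).fintype_card_le_finrank
    _ = U.card := by rw [Module.finrank_fintype_fun_eq_card, Fintype.card_coe]

end LinearIndependent

theorem stmt3_general {m n R : Type*} [Semiring R] [StrongRankCondition R] [Fintype n]
    (M : Matrix m n R) (hM : LinearIndependent R M.row) (S : Finset m) (T : Finset n)
    (h : ∀ i ∈ S, ∀ j ∈ T, M i j = 0) :
    S.card + T.card ≤ Fintype.card n := by
  classical
  have rows_independent : LinearIndependent R fun i : S ↦ M.row i :=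
    hM.comp _ Subtype.val_injective
  have rows_support (i : S) : Function.support (M.row i) ⊆ (Tᶜ : Finset n) := by
    refine Function.support_subset_iff'.2 fun j hj ↦ h i i.2 j ?_
    simpa only [Finset.mem_coe, Finset.mem_compl, not_not] using hj
  have card_le : S.card ≤ Tᶜ.card := by
    simpa only [Fintype.card_coe] using
      card_le_card_of_linearIndependent_of_support_subset rows_independent rows_support
  calc S.card + T.card
    _ ≤ Tᶜ.card + T.card := by gcongr
    _ = Fintype.card n := T.card_compl_add_card

/-- An invertible `n × n` matrix over a field cannot have an all-zero block whose
side lengths sum to more than `n`. -/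
theorem stmt3 {K : Type*} [Field K] {n : ℕ} (M : Matrix (Fin n) (Fin n) K)
    (hM : IsUnit M) (S T : Finset (Fin n))
    (h : ∀ i ∈ S, ∀ j ∈ T, M i j = 0) :
    S.card + T.card ≤ n := by
  simpa only [Fintype.card_fin] using
    stmt3_general M (Matrix.linearIndependent_rows_of_isUnit hM) S T h
end

section
/- Let e₁, e₂, e₃ be integers with 0 < e₁ ≤ e₂ ≤ e₃, e₂ ≤ 2e₁, and e₃ ≤ e₁ + e₂. Then there exist integers f₁ ≤ f₂ with f₁ + f₂ = e₁ + e₂ + e₃, f₁ ≤ 2e₁, f₂ ≤ 2e₂, and f₂ ≤ e₁ + e₃. -/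
/-!
Once the sum `s = f₁ + f₂` is prescribed, the conditions `f₁ ≤ f₂` and `f₁ ≤ u` read `s ≤ f₂ + f₂`
and `s ≤ u + f₂`, so they only get easier as `f₂` grows. It is therefore enough to test the largest
value that the upper bounds allow, here `f₂ = 2e₂ ⊓ (e₁ + e₃)`. This choice involves no division,
so integer points lift to integer points.
-/

theorem exists_le_add_eq_le_le_iff {G : Type*} [AddCommGroup G] [Preorder G]
    [IsOrderedAddMonoid G] {s u v : G} :
    (∃ f₁ f₂ : G, f₁ ≤ f₂ ∧ f₁ + f₂ = s ∧ f₁ ≤ u ∧ f₂ ≤ v) ↔ s ≤ v + v ∧ s ≤ u + v := by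
  constructor
  · rintro ⟨f₁, f₂, hf, rfl, hu, hv⟩
    exact ⟨add_le_add (hf.trans hv) hv, add_le_add hu hv⟩
  · rintro ⟨hv, hu⟩
    exact ⟨s - v, v, sub_le_iff_le_add.mpr hv, sub_add_cancel s v,
      sub_le_iff_le_add.mpr hu, le_rfl⟩

section Lattice

variable {G : Type*} [AddCommGroup G] [Lattice G] [IsOrderedAddMonoid G]

theorem le_inf_add_inf_self_iff {a b c : G} :
    a ≤ b ⊓ c + b ⊓ c ↔ a ≤ b + b ∧ a ≤ b + c ∧ a ≤ c + c := by
  rw [add_inf, inf_add, inf_add, add_comm c b]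
  simp only [le_inf_iff]
  tauto

theorem exists_le_add_eq_le_le_le_iff {s u v w : G} :
    (∃ f₁ f₂ : G, f₁ ≤ f₂ ∧ f₁ + f₂ = s ∧ f₁ ≤ u ∧ f₂ ≤ v ∧ f₂ ≤ w) ↔
      (s ≤ v + v ∧ s ≤ v + w ∧ s ≤ w + w) ∧ s ≤ u + v ∧ s ≤ u + w := by
  rw [← le_inf_add_inf_self_iff, ← le_inf_iff, ← add_inf, ← exists_le_add_eq_le_le_iff]
  simp only [le_inf_iff]

theorem stmt4_general (e₁ e₂ e₃ : G) (h12 : e₁ ≤ e₂) (h23 : e₂ ≤ e₃)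
    (h2 : e₂ ≤ 2 • e₁) (h3 : e₃ ≤ e₁ + e₂) :
    ∃ f₁ f₂ : G, f₁ ≤ f₂ ∧ f₁ + f₂ = e₁ + e₂ + e₃ ∧ f₁ ≤ 2 • e₁ ∧ f₂ ≤ 2 • e₂ ∧
      f₂ ≤ e₁ + e₃ := by
  rw [exists_le_add_eq_le_le_le_iff]
  simp only [two_nsmul] at h2 ⊢
  have e₁_nonneg : 0 ≤ e₁ := (le_add_iff_nonneg_left e₁).mp (h12.trans h2)
  have e₂_nonneg : 0 ≤ e₂ := e₁_nonneg.trans h12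
  have sum_le_two_e₂_add_two_e₂ : e₁ + e₂ + e₃ ≤ e₂ + e₂ + (e₂ + e₂) := by
    grw [h3, h12]
  have sum_le_two_e₂_add : e₁ + e₂ + e₃ ≤ e₂ + e₂ + (e₁ + e₃) := calc
    e₁ + e₂ + e₃ ≤ e₁ + e₂ + e₃ + e₂ := le_add_of_nonneg_right e₂_nonneg
    _ = e₂ + e₂ + (e₁ + e₃) := by abel
  have sum_le_add_self : e₁ + e₂ + e₃ ≤ e₁ + e₃ + (e₁ + e₃) :=
    add_le_add (by gcongr) (le_add_of_nonneg_left e₁_nonneg)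
  have sum_le_two_e₁_add_two_e₂ : e₁ + e₂ + e₃ ≤ e₁ + e₁ + (e₂ + e₂) := calc
    e₁ + e₂ + e₃ ≤ e₁ + e₂ + (e₁ + e₂) := by gcongr
    _ = e₁ + e₁ + (e₂ + e₂) := add_add_add_comm e₁ e₂ e₁ e₂
  have sum_le_two_e₁_add : e₁ + e₂ + e₃ ≤ e₁ + e₁ + (e₁ + e₃) := calc
    e₁ + e₂ + e₃ ≤ e₁ + (e₁ + e₁) + e₃ := by gcongr
    _ = e₁ + e₁ + (e₁ + e₃) := by abel
  exact ⟨⟨sum_le_two_e₂_add_two_e₂, sum_le_two_e₂_add, sum_le_add_self⟩,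
    sum_le_two_e₁_add_two_e₂, sum_le_two_e₁_add⟩

end Lattice

/-- Every integer point of the polytope `𝒫₄` lifts to an integer point of the
polytope `𝒬` of quintuples `(e₁,e₂,e₃;f₁,f₂)`. -/
theorem stmt4 (e₁ e₂ e₃ : ℤ) (h0 : 0 < e₁) (h12 : e₁ ≤ e₂) (h23 : e₂ ≤ e₃)
    (h2 : e₂ ≤ 2 * e₁) (h3 : e₃ ≤ e₁ + e₂) :
    ∃ f₁ f₂ : ℤ, f₁ ≤ f₂ ∧ f₁ + f₂ = e₁ + e₂ + e₃ ∧ f₁ ≤ 2 * e₁ ∧ f₂ ≤ 2 * e₂ ∧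
      f₂ ≤ e₁ + e₃ := by
  simp only [← Nat.ofNat_nsmul_eq_mul] at h2 ⊢
  exact stmt4_general e₁ e₂ e₃ h12 h23 h2 h3
end

section
/- Fix an integer d ≥ 5. Let S be the set of tuples (e₁, …, e_{d−1}) of positive integers that are nondecreasing, such that the padded sequence (0, e₁, …, e_{d−1}, 0) is concave (its successive differences are nonincreasing), and such that for some integer a ≥ 5 one has e₁ = a, e₂ = 2a, e₃ = 3a, and e₄ ≥ 3a + 5. Let T = { e₁ + ⋯ + e_{d−1} : (e₁,…,e_{d−1}) ∈ S }. Then the set of positive integers not in T is finite; equivalently, there exists N such that every integer n ≥ N lies in T. -/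
/-!
Put `m = d - 2` and let `e` rise with slope `a` until it is cut off at the height `m * a + v`, where
`5 ≤ v ≤ a`: its steps are `a, …, a, v`, the first three of them `a` because `m ≥ 3`. A minimum of
concave sequences is concave, so `e` is concave, and it stays so when a nonnegative last term is
replaced by `0`. The sum of `e` is `q * a + v` with `q = (1 + ⋯ + m) + m`. As `v` runs over `q`
consecutive integers starting at `5`, these sums meet every residue class modulo `q`, and the
quotient `a` exceeds the remainder `v` once the sum is large.
-/

/-- The sequence `(0, e₁, …, e_{d-1}, 0)`: pad `e` with zeroes at indices `0` and `d`. -/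
def paddedSeq (d : ℕ) (e : ℕ → ℤ) : ℕ → ℤ :=
  fun i => if i = 0 ∨ i = d then 0 else e i

/-- Concavity of an infinite sequence, in the form in which the paper states it for finite ones:
consecutive differences are nonincreasing. -/
def ConcaveSeq {G : Type*} [Sub G] [LE G] (u : ℕ → G) : Prop :=
  ∀ i, u (i + 2) - u (i + 1) ≤ u (i + 1) - u i

/-- The sequence `0, a, 2a, …` cut off at height `M`: the family from which the tuples `e` are
taken. -/
def cappedRamp {G : Type*} [AddMonoid G] [LinearOrder G] (a M : G) (i : ℕ) : G :=
  min (i • a) M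

section Concavity

variable {G : Type*} [AddCommGroup G]

theorem concaveSeq_const [Preorder G] (M : G) : ConcaveSeq fun _ => M :=
  fun _ => le_rfl

theorem concaveSeq_nsmul [Preorder G] (a : G) : ConcaveSeq fun i => i • a := by
  intro i
  simp only [succ_nsmul, add_sub_cancel_left, le_refl]

variable [LinearOrder G] [IsOrderedAddMonoid G]

theorem ConcaveSeq.min {u w : ℕ → G} (hu : ConcaveSeq u) (hw : ConcaveSeq w) :
    ConcaveSeq fun i => min (u i) (w i) := by
  intro i
  beta_reduce
  have hui := hu i
  have hwi := hw i
  rw [sub_le_sub_iff] at hui hwi ⊢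
  rcases min_choice (u (i + 1)) (w (i + 1)) with h | h <;> rw [h]
  · exact (add_le_add (min_le_left _ _) (min_le_left _ _)).trans hui
  · exact (add_le_add (min_le_right _ _) (min_le_right _ _)).trans hwi

theorem concaveSeq_cappedRamp (a M : G) : ConcaveSeq (cappedRamp a M) :=
  (concaveSeq_nsmul a).min (concaveSeq_const M)

end Concavity

section CappedRamp

variable {G : Type*} [AddCommMonoid G] [LinearOrder G] {a v M : G} {i m : ℕ}

theorem cappedRamp_zero (hM : 0 ≤ M) : cappedRamp a M 0 = 0 := by
  simp only [cappedRamp, zero_nsmul, min_eq_left hM]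

variable [IsOrderedAddMonoid G]

theorem monotone_cappedRamp (ha : 0 ≤ a) : Monotone (cappedRamp a M) :=
  fun _ _ hij => min_le_min_right M (nsmul_le_nsmul_left ha hij)

theorem cappedRamp_of_le (ha : 0 ≤ a) (hv : 0 ≤ v) (hi : i ≤ m) :
    cappedRamp a (m • a + v) i = i • a :=
  min_eq_left (le_add_of_le_of_nonneg (nsmul_le_nsmul_left ha hi) hv)

theorem cappedRamp_succ (hva : v ≤ a) : cappedRamp a (m • a + v) (m + 1) = m • a + v := by
  rw [cappedRamp, succ_nsmul]
  exact min_eq_right (add_le_add_right hva _)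

theorem sum_cappedRamp (hv : 0 ≤ v) (hva : v ≤ a) :
    ∑ i ∈ Finset.Icc 1 (m + 1), cappedRamp a (m • a + v) i =
      (∑ i ∈ Finset.Icc 1 m, i + m) • a + v := by
  have hramp : ∀ i ∈ Finset.Icc 1 m, cappedRamp a (m • a + v) i = i • a := fun i hi =>
    cappedRamp_of_le (hv.trans hva) hv (Finset.mem_Icc.1 hi).2
  rw [Finset.sum_Icc_succ_top (Nat.le_add_left 1 m), Finset.sum_congr rfl hramp,
    cappedRamp_succ hva, Finset.sum_nsmul_assoc, add_nsmul, add_assoc]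

theorem nsmul_add_le_cappedRamp_succ (hv : 0 ≤ v) (hva : v ≤ a) (hi : i ≤ m) :
    i • a + v ≤ cappedRamp a (m • a + v) (i + 1) := by
  rw [cappedRamp, succ_nsmul]
  exact le_min (add_le_add_right hva _)
    (add_le_add_left (nsmul_le_nsmul_left (hv.trans hva) hi) v)

end CappedRamp

section Padding

variable {d i : ℕ} {e : ℕ → ℤ}

theorem paddedSeq_of_lt (h0 : e 0 = 0) (hi : i < d) : paddedSeq d e i = e i := by
  rcases eq_or_ne i 0 with rfl | hi0
  · simp only [paddedSeq, true_or, if_true, h0]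
  · exact if_neg (not_or.2 ⟨hi0, hi.ne⟩)

theorem paddedSeq_le (h0 : e 0 = 0) (hd : 0 ≤ e d) (i : ℕ) : paddedSeq d e i ≤ e i := by
  unfold paddedSeq
  split_ifs with h
  · rcases h with rfl | rfl
    exacts [h0.ge, hd]
  · exact le_rfl

theorem ConcaveSeq.paddedSeq_sub_le (he : ConcaveSeq e) (h0 : e 0 = 0) (hd : 0 ≤ e d)
    (hi : 1 ≤ i) (hid : i < d) :
    paddedSeq d e (i + 1) - paddedSeq d e i ≤ paddedSeq d e i - paddedSeq d e (i - 1) := by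
  obtain ⟨j, rfl⟩ := Nat.exists_eq_add_of_le' hi
  rw [Nat.add_sub_cancel, paddedSeq_of_lt h0 hid, paddedSeq_of_lt h0 (Nat.lt_of_succ_lt hid)]
  exact (sub_le_sub_right (paddedSeq_le h0 hd _) _).trans (he j)

end Padding

theorem exists_mul_add_eq_of_le {q c n : ℤ} (hq : 0 < q) (hn : (q + 1) * (c + q) ≤ n) :
    ∃ a v, c ≤ v ∧ v ≤ a ∧ q * a + v = n := by
  obtain ⟨a, ⟨hcv, hvq⟩, -⟩ := existsUnique_sub_zsmul_mem_Ico hq n c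
  rw [smul_eq_mul] at hcv hvq
  have hqa : c + q < a := by
    refine lt_of_mul_lt_mul_left ?_ hq.le
    linarith
  exact ⟨a, n - a * q, hcv, (hvq.trans hqa).le, by ring⟩

/-- Fix `d ≥ 5`.  All sufficiently large integers are sums `e₁ + ⋯ + e_{d-1}` of a
nondecreasing sequence of positive integers whose zero-padding is concave and which
starts `a, 2a, 3a, e₄` with `a ≥ 5` and `e₄ ≥ 3a + 5`. -/
theorem stmt5 (d : ℕ) (hd : 5 ≤ d) :
    ∃ N : ℤ, ∀ n : ℤ, N ≤ n →
      ∃ e : ℕ → ℤ,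
        (∀ i, 1 ≤ i → i ≤ d - 1 → 1 ≤ e i) ∧
        (∀ i, 1 ≤ i → i < d - 1 → e i ≤ e (i + 1)) ∧
        (∀ i, 1 ≤ i → i ≤ d - 1 →
          paddedSeq d e (i + 1) - paddedSeq d e i ≤
            paddedSeq d e i - paddedSeq d e (i - 1)) ∧
        (∃ a : ℤ, 5 ≤ a ∧ e 1 = a ∧ e 2 = 2 * a ∧ e 3 = 3 * a ∧ 3 * a + 5 ≤ e 4) ∧
        (∑ i ∈ Finset.Icc 1 (d - 1), e i) = n := by
  obtain ⟨m, rfl⟩ : ∃ m, d = m + 2 := Nat.exists_eq_add_of_le' (by omega)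
  have hm : 3 ≤ m := by omega
  set q : ℕ := ∑ i ∈ Finset.Icc 1 m, i + m
  refine ⟨(q + 1) * (5 + q), fun n hn => ?_⟩
  obtain ⟨a, v, hv, hva, hsum⟩ := exists_mul_add_eq_of_le (by omega) hn
  have hv0 : 0 ≤ v := by omega
  have ha0 : 0 ≤ a := hv0.trans hva
  set e := cappedRamp a (m • a + v)
  have hlin : ∀ i ≤ m, e i = i • a := fun i hi => cappedRamp_of_le ha0 hv0 hi
  have he0 : e 0 = 0 := cappedRamp_zero (by positivity)
  have he1 : e 1 = a := (hlin 1 (by omega)).trans (one_nsmul a)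
  have hmono : Monotone e := monotone_cappedRamp ha0
  refine ⟨e, fun i hi _ => ?_, fun i _ _ => hmono i.le_succ, fun i hi hid => ?_, ?_, ?_⟩
  · linarith [hmono hi]
  · exact (concaveSeq_cappedRamp _ _).paddedSeq_sub_le he0 (he0 ▸ hmono (Nat.zero_le _)) hi
      (Nat.lt_succ_of_le hid)
  · exact ⟨a, hv.trans hva, he1, hlin 2 (by omega), hlin 3 hm,
      (add_le_add_right hv _).trans (nsmul_add_le_cappedRamp_succ hv0 hva hm)⟩
  · exact (sum_cappedRamp hv0 hva).trans hsum
end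

section
/- Fix an integer d ≥ 2. Work in the multivariate polynomial ring R = MvPolynomial over ℚ in variables A₀, A₁, …, A_d, and let f ∈ R[X] be the generic degree-d polynomial f = A₀·X^d + A₁·X^{d−1} + ⋯ + A_{d−1}·X + A_d (each coefficient the corresponding variable, viewed as a constant of R[X]). Then the monomial A₀·A₁²·A₂²⋯A_{d−1}² occurs with nonzero coefficient in the resultant Res(f, f′) ∈ R of f and its derivative f′. -/
open Polynomial

/-- The Sylvester matrix of two polynomials `f`, `g`, regarded as having degrees (at
most) `m` and `n` respectively: an `(m+n) × (m+n)` matrix whose first `n` rows are the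
shifts of the coefficients of `f` and whose remaining `m` rows are the shifts of the
coefficients of `g`. -/
def sylvesterMatrix {R : Type*} [CommRing R] (m n : ℕ) (f g : Polynomial R) :
    Matrix (Fin (m + n)) (Fin (m + n)) R :=
  Matrix.of fun i j =>
    if (i : ℕ) < n then
      (if (i : ℕ) ≤ (j : ℕ) ∧ (j : ℕ) ≤ (i : ℕ) + m then f.coeff (m + i - j) else 0)
    else
      (if (i : ℕ) - n ≤ (j : ℕ) ∧ (j : ℕ) ≤ ((i : ℕ) - n) + n then
        g.coeff (n + ((i : ℕ) - n) - j) else 0)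

/-- The resultant of `f` and `g`, of degrees (at most) `m` and `n`: the determinant of
their Sylvester matrix. -/
def resultantPoly {R : Type*} [CommRing R] (m n : ℕ) (f g : Polynomial R) : R :=
  (sylvesterMatrix m n f g).det

/-- The generic polynomial of degree `d`: `A₀ X^d + A₁ X^{d-1} + ⋯ + A_d` over
`ℚ[A₀, …, A_d]`. -/
noncomputable def genericPoly (d : ℕ) : Polynomial (MvPolynomial (Fin (d + 1)) ℚ) :=
  ∑ i : Fin (d + 1), Polynomial.C (MvPolynomial.X i) * Polynomial.X ^ (d - (i : ℕ))

/-!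
Setting `A_d = 0` turns the generic polynomial of degree `d` into `X g`, where `g` is the generic
polynomial of degree `d - 1`, and it keeps the coefficients of all monomials not involving `A_d`.
Since `(X g)′ ≡ g` modulo `X` and `(X g)′ ≡ X g′` modulo `g`, multiplicativity of the resultant
gives `Res(X g, (X g)′) = (-1)^(d-1) g(0)² Res(g, g′)`, and `g(0) = A_{d-1}`. So the coefficient of
`A₀ A₁² ⋯ A_{d-1}²` in degree `d` is `(-1)^(d-1)` times its analogue in degree `d - 1`, which makes
it `±1`, over any coefficient ring.
-/

section Resultant

variable {R : Type*} [CommRing R]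

theorem sylvesterMatrix_eq_submatrix_rev (m n : ℕ) (f g : R[X]) :
    sylvesterMatrix m n f g = (sylvester f g m n).transpose.submatrix Fin.revPerm Fin.revPerm := by
  ext i j
  obtain ⟨i, rfl⟩ := Fin.revPerm.surjective i
  simp only [sylvesterMatrix, sylvester, Matrix.of_apply, Matrix.submatrix_apply,
    Matrix.transpose_apply, Fin.revPerm_apply, Fin.rev_rev, Set.mem_Icc]
  induction i using Fin.addCases with
  | left i =>
    simp only [Fin.addCases_left, Fin.val_rev, Fin.val_castAdd]
    rw [if_neg (by omega)]
    split_ifs <;> first | omega | rfl | (congr 1; omega)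
  | right i =>
    simp only [Fin.addCases_right, Fin.val_rev, Fin.val_natAdd]
    rw [if_pos (by omega)]
    split_ifs <;> first | omega | rfl | (congr 1; omega)

theorem resultantPoly_eq_resultant (m n : ℕ) (f g : R[X]) :
    resultantPoly m n f g = resultant f g m n := by
  rw [resultantPoly, sylvesterMatrix_eq_submatrix_rev, Matrix.det_submatrix_equiv_self,
    Matrix.det_transpose, resultant]

theorem resultant_mul_left_of_natDegree_le {f₁ f₂ g : R[X]} {m₁ m₂ n : ℕ}
    (hf₁ : f₁.natDegree ≤ m₁) (hf₂ : f₂.natDegree ≤ m₂) (hg : g.natDegree ≤ n) :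
    resultant (f₁ * f₂) g (m₁ + m₂) n = resultant f₁ g m₁ n * resultant f₂ g m₂ n := by
  obtain ⟨k₁, rfl⟩ := Nat.exists_eq_add_of_le hf₁
  obtain ⟨k₂, rfl⟩ := Nat.exists_eq_add_of_le hf₂
  rw [add_add_add_comm, resultant_add_left_deg _ _ _ _ _ natDegree_mul_le,
    resultant_add_left_deg _ _ _ _ _ le_rfl, resultant_add_left_deg _ _ _ _ _ le_rfl,
    resultant_mul_left _ _ _ _ hg]
  ring

theorem resultant_X_mul_left {f g : R[X]} {m n : ℕ} (hf : f.natDegree ≤ m) (hg : g.natDegree ≤ n) :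
    resultant (X * f) g (m + 1) n = g.coeff 0 * resultant f g m n := by
  have resultant_X : resultant X g 1 n = g.coeff 0 := by
    have h := resultant_X_pow_left g 1 n hg
    rwa [pow_one, pow_one] at h
  rw [add_comm m 1, resultant_mul_left_of_natDegree_le natDegree_X_le hf hg, resultant_X]

theorem resultant_X_mul_right {f g : R[X]} {m n : ℕ} (hf : f.natDegree ≤ m)
    (hg : g.natDegree ≤ n) :
    resultant f (X * g) m (n + 1) = (-1) ^ m * f.coeff 0 * resultant f g m n := by
  rw [resultant_comm, resultant_X_mul_left hg hf, resultant_comm g]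
  have sign_sq : ((-1 : R) ^ (m * n)) * (-1) ^ (m * n) = 1 := by
    rw [← mul_pow, neg_one_mul, neg_neg, one_pow]
  linear_combination (-1) ^ m * f.coeff 0 * resultant f g m n * sign_sq

theorem resultant_X_mul_derivative {g : R[X]} {n : ℕ} (hg : g.natDegree ≤ n + 1) :
    resultant (X * g) (derivative (X * g)) (n + 2) (n + 1) =
      (-1) ^ (n + 1) * g.coeff 0 ^ 2 * resultant g (derivative g) (n + 1) n := by
  have product_rule : derivative (X * g) = X * derivative g + g * 1 := by
    rw [derivative_mul, derivative_X]; ring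
  have natDegree_derivative_X_mul : (derivative (X * g)).natDegree ≤ n + 1 := by
    have := natDegree_mul_le_of_le (natDegree_X_le (R := R)) hg
    exact (natDegree_derivative_le _).trans (by omega)
  have natDegree_derivative : (derivative g).natDegree ≤ n :=
    (natDegree_derivative_le g).trans (by omega)
  calc resultant (X * g) (derivative (X * g)) (n + 2) (n + 1)
      = g.coeff 0 * resultant g (X * derivative g + g * 1) (n + 1) (n + 1) := by
        rw [resultant_X_mul_left hg natDegree_derivative_X_mul, product_rule]
        simp only [coeff_add, mul_one, coeff_X_mul_zero, zero_add]
    _ = g.coeff 0 * resultant g (X * derivative g) (n + 1) (n + 1) := by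
        rw [resultant_add_mul_right _ _ _ _ _ (by simp) hg]
    _ = (-1) ^ (n + 1) * g.coeff 0 ^ 2 * resultant g (derivative g) (n + 1) n := by
        rw [resultant_X_mul_right hg natDegree_derivative]
        ring

end Resultant

section UniversalPolynomial

/-- The polynomial `a₀ X^d + a₁ X^{d-1} + ⋯ + a_d` with coefficient vector `a`, listed from the
coefficient of `X^d` down to the constant term as in `genericPoly`. -/
noncomputable def ofDescCoeffs {R : Type*} [Semiring R] {d : ℕ} (a : Fin (d + 1) → R) : R[X] :=
  ∑ i : Fin (d + 1), C (a i) * X ^ (d - (i : ℕ))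

section Semiring

variable {R : Type*} [Semiring R] {d : ℕ}

theorem natDegree_ofDescCoeffs_le (a : Fin (d + 1) → R) : (ofDescCoeffs a).natDegree ≤ d :=
  natDegree_sum_le_of_forall_le _ _ fun _ _ =>
    (natDegree_C_mul_X_pow_le _ _).trans (Nat.sub_le _ _)

theorem coeff_ofDescCoeffs (a : Fin (d + 1) → R) (i : Fin (d + 1)) :
    (ofDescCoeffs a).coeff (d - i) = a i := by
  rw [ofDescCoeffs, finsetSum_coeff, Finset.sum_eq_single i]
  · simp
  · intro j _ hji
    have : (j : ℕ) ≠ i := Fin.val_ne_of_ne hji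
    rw [coeff_C_mul, coeff_X_pow, if_neg (by omega), mul_zero]
  · simp

theorem map_ofDescCoeffs {S : Type*} [Semiring S] (φ : R →+* S) (a : Fin (d + 1) → R) :
    (ofDescCoeffs a).map φ = ofDescCoeffs (φ ∘ a) := by
  simp [ofDescCoeffs, Polynomial.map_sum]

theorem ofDescCoeffs_snoc_zero (a : Fin (d + 1) → R) :
    ofDescCoeffs (Fin.snoc a 0 : Fin (d + 2) → R) = X * ofDescCoeffs a := by
  rw [ofDescCoeffs, Fin.sum_univ_castSucc, Fin.snoc_last, C_0, zero_mul, add_zero, ofDescCoeffs,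
    Finset.mul_sum]
  refine Finset.sum_congr rfl fun i _ => ?_
  rw [Fin.snoc_castSucc, Fin.val_castSucc, show d + 1 - (i : ℕ) = (d - i) + 1 by omega, pow_succ',
    ← mul_assoc, ← mul_assoc, X_mul_C]

end Semiring

/-- The universal polynomial `A₀ X^d + A₁ X^{d-1} + ⋯ + A_d` over `R[A₀, …, A_d]`; over `ℚ` it is
`genericPoly d`. -/
noncomputable def universalPoly (R : Type*) [CommSemiring R] (d : ℕ) :
    (MvPolynomial (Fin (d + 1)) R)[X] :=
  ofDescCoeffs MvPolynomial.X

theorem natDegree_universalPoly_le (R : Type*) [CommSemiring R] (d : ℕ) :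
    (universalPoly R d).natDegree ≤ d :=
  natDegree_ofDescCoeffs_le _

theorem coeff_universalPoly (R : Type*) [CommSemiring R] {d : ℕ} (i : Fin (d + 1)) :
    (universalPoly R d).coeff (d - i) = MvPolynomial.X i :=
  coeff_ofDescCoeffs _ i

theorem killCompl_castSucc_comp_X (R : Type*) [CommSemiring R] (n : ℕ) :
    MvPolynomial.killCompl (R := R) (Fin.castSucc_injective n) ∘ MvPolynomial.X =
      (Fin.snoc MvPolynomial.X 0 : Fin (n + 1) → MvPolynomial (Fin n) R) := by
  funext i
  induction i using Fin.lastCases with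
  | last =>
    have last_notMem_range : Fin.last n ∉ Set.range (Fin.castSucc : Fin n → Fin (n + 1)) :=
      fun ⟨j, hj⟩ => Fin.castSucc_ne_last j hj
    rw [Function.comp_apply, MvPolynomial.killCompl, MvPolynomial.aeval_X,
      dif_neg last_notMem_range, Fin.snoc_last]
  | cast j =>
    rw [Function.comp_apply, ← MvPolynomial.rename_X, MvPolynomial.killCompl_rename_app,
      Fin.snoc_castSucc]

theorem map_killCompl_universalPoly (R : Type*) [CommSemiring R] (d : ℕ) :
    (universalPoly R (d + 1)).map
        (MvPolynomial.killCompl (R := R) (Fin.castSucc_injective (d + 1)) : _ →+* _) =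
      X * universalPoly R d := by
  rw [universalPoly, map_ofDescCoeffs, RingHom.coe_coe, killCompl_castSucc_comp_X,
    ofDescCoeffs_snoc_zero, universalPoly]

theorem killCompl_resultant_universalPoly (R : Type*) [CommRing R] (n : ℕ) :
    MvPolynomial.killCompl (Fin.castSucc_injective (n + 2))
        (resultant (universalPoly R (n + 2)) (derivative (universalPoly R (n + 2)))
          (n + 2) (n + 1)) =
      (-1) ^ (n + 1) * MvPolynomial.X (Fin.last (n + 1)) ^ 2 *
        resultant (universalPoly R (n + 1)) (derivative (universalPoly R (n + 1))) (n + 1) n := by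
  have coeff_zero : (universalPoly R (n + 1)).coeff 0 = MvPolynomial.X (Fin.last (n + 1)) := by
    simpa using coeff_universalPoly R (Fin.last (n + 1))
  rw [← RingHom.coe_coe, ← resultant_map_map, ← derivative_map, map_killCompl_universalPoly,
    resultant_X_mul_derivative (natDegree_universalPoly_le R _), coeff_zero]

end UniversalPolynomial

section DiscriminantExponent

/-- The exponent vector `(1, 2, …, 2, 0)` of the monomial `A₀ A₁² ⋯ A_{d-1}²`. -/
noncomputable def discrExponent (d : ℕ) : Fin (d + 1) →₀ ℕ :=
  Finsupp.equivFunOnFinite.symm fun i : Fin (d + 1) =>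
    if (i : ℕ) = 0 then 1 else if (i : ℕ) = d then 0 else 2

theorem discrExponent_one : discrExponent 1 = Finsupp.single 0 1 := by
  ext i
  fin_cases i <;> simp [discrExponent]

theorem discrExponent_add_two (n : ℕ) :
    discrExponent (n + 2) =
      (Finsupp.single (Fin.last (n + 1)) 2 + discrExponent (n + 1)).mapDomain Fin.castSucc := by
  ext i
  induction i using Fin.lastCases with
  | last =>
    rw [Finsupp.mapDomain_of_notMem_range _ _ fun ⟨j, hj⟩ => Fin.castSucc_ne_last j hj]
    simp [discrExponent]
  | cast i =>
    rw [Finsupp.mapDomain_apply (Fin.castSucc_injective _)]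
    simp only [discrExponent, Finsupp.equivFunOnFinite_symm_apply_apply, Finsupp.add_apply,
      Finsupp.single_apply, Fin.ext_iff, Fin.val_castSucc, Fin.val_last]
    split_ifs <;> omega

end DiscriminantExponent

theorem coeff_resultant_universalPoly_one (R : Type*) [CommRing R] :
    MvPolynomial.coeff (discrExponent 1)
      (resultant (universalPoly R 1) (derivative (universalPoly R 1)) 1 0) = 1 := by
  have leading_coeff : (universalPoly R 1).coeff 1 = MvPolynomial.X 0 :=
    coeff_universalPoly R 0
  rw [resultant_zero_right_deg, coeff_derivative, zero_add, leading_coeff, discrExponent_one]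
  simp

theorem coeff_resultant_universalPoly_add_two (R : Type*) [CommRing R] (n : ℕ) :
    MvPolynomial.coeff (discrExponent (n + 2))
        (resultant (universalPoly R (n + 2)) (derivative (universalPoly R (n + 2)))
          (n + 2) (n + 1)) =
      (-1) ^ (n + 1) * MvPolynomial.coeff (discrExponent (n + 1))
        (resultant (universalPoly R (n + 1)) (derivative (universalPoly R (n + 1)))
          (n + 1) n) := by
  have sign_eq_C : (-1 : MvPolynomial (Fin (n + 2)) R) ^ (n + 1) =
      MvPolynomial.C ((-1) ^ (n + 1)) := by simp
  rw [discrExponent_add_two, ← MvPolynomial.coeff_killCompl (Fin.castSucc_injective _),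
    killCompl_resultant_universalPoly, mul_assoc, sign_eq_C, MvPolynomial.coeff_C_mul,
    MvPolynomial.X_pow_eq_monomial, MvPolynomial.coeff_monomial_mul, one_mul]

theorem stmt7_general (R : Type*) [CommRing R] (d : ℕ) (hd : d ≠ 0) :
    MvPolynomial.coeff (discrExponent d)
      (resultantPoly d (d - 1) (universalPoly R d) (derivative (universalPoly R d))) =
        (-1) ^ d.choose 2 := by
  obtain ⟨n, rfl⟩ := Nat.exists_eq_add_one_of_ne_zero hd
  rw [resultantPoly_eq_resultant, Nat.add_sub_cancel]
  induction n with
  | zero => simpa using coeff_resultant_universalPoly_one R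
  | succ n ih =>
    rw [coeff_resultant_universalPoly_add_two, ih n.succ_ne_zero, ← pow_add,
      Nat.choose_succ_succ' (n + 1) 1, Nat.choose_one_right]

/-- The monomial `A₀ · A₁² ⋯ A_{d-1}²` occurs with nonzero coefficient in the resultant
`Res(f, f′)` of the generic degree-`d` polynomial `f` and its derivative. -/
theorem stmt7 (d : ℕ) (hd : 2 ≤ d) :
    MvPolynomial.coeff
      (Finsupp.equivFunOnFinite.symm fun i : Fin (d + 1) =>
        if (i : ℕ) = 0 then 1 else if (i : ℕ) = d then 0 else 2)
      (resultantPoly d (d - 1) (genericPoly d)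
        (Polynomial.derivative (genericPoly d))) ≠ 0 := by
  rw [show genericPoly d = universalPoly ℚ d from rfl]
  exact (stmt7_general ℚ d (by omega)).trans_ne (pow_ne_zero _ (by norm_num))
end

section
/- Define 𝒬 ⊂ ℝ⁵ as the set of quintuples (e₁, e₂, e₃, f₁, f₂) satisfying e₁ + e₂ + e₃ = 1, f₁ + f₂ = 1, e₁ ≤ e₂ ≤ e₃, f₁ ≤ f₂, f₁ ≤ 2e₁, f₂ ≤ 2e₂, and f₂ ≤ e₁ + e₃. Then 𝒬 equals the convex hull in ℝ⁵ of the six points (1/3, 1/3, 1/3, 1/2, 1/2), (1/4, 1/4, 1/2, 1/2, 1/2), (1/4, 3/8, 3/8, 1/2, 1/2), (1/3, 1/3, 1/3, 1/3, 2/3), (1/5, 2/5, 2/5, 2/5, 3/5), and (1/6, 1/3, 1/2, 1/3, 2/3). -/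
/-- The polytope `𝒬` of normalized invariants `(e₁, e₂, e₃, f₁, f₂)` of primitive
tetragonal covers. -/
def polytopeQ : Set (Fin 5 → ℝ) :=
  {v | v 0 + v 1 + v 2 = 1 ∧ v 3 + v 4 = 1 ∧ v 0 ≤ v 1 ∧ v 1 ≤ v 2 ∧ v 3 ≤ v 4 ∧
       v 3 ≤ 2 * v 0 ∧ v 4 ≤ 2 * v 1 ∧ v 4 ≤ v 0 + v 2}

/-!
Pulling the vertex `B = (1/4, 1/4, 1/2, 1/2, 1/2)` triangulates `𝒬`: the walls `e₁ + e₂ = f₂` and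
`e₂ - e₁ = f₂ - f₁` cut it into three simplices sharing the diagonal from `B` to
`(1/5, 2/5, 2/5, 2/5, 3/5)`. On each of them the barycentric coordinates are positive multiples of
slacks of the inequalities defining `𝒬` or of the walls, hence nonnegative, so every point of `𝒬` is
a convex combination of the vertices of its simplex.
-/

theorem mem_convexHull_range_of_sum_mul_eq {𝕜 κ n : Type*} [Field 𝕜] [LinearOrder 𝕜]
    [IsStrictOrderedRing 𝕜] [Fintype κ] {x : κ → n → 𝕜} {v : n → 𝕜} (w : κ → 𝕜)
    (nonneg : ∀ k, 0 ≤ w k) (sum_eq_one : ∑ k, w k = 1) (coord_eq : ∀ j, ∑ k, w k * x k j = v j) :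
    v ∈ convexHull 𝕜 (Set.range x) :=
  mem_convexHull_of_exists_fintype w x nonneg sum_eq_one Set.mem_range_self <| by
    ext j
    simpa only [Finset.sum_apply, Pi.smul_apply, smul_eq_mul] using coord_eq j

/-- The vertices of the polytope `𝒬`, as a family, so that a simplex of its triangulation is
given by a quadruple of indices. -/
noncomputable def vertexQ : Fin 6 → Fin 5 → ℝ :=
  ![![1 / 3, 1 / 3, 1 / 3, 1 / 2, 1 / 2], ![1 / 4, 1 / 4, 1 / 2, 1 / 2, 1 / 2],
    ![1 / 4, 3 / 8, 3 / 8, 1 / 2, 1 / 2], ![1 / 3, 1 / 3, 1 / 3, 1 / 3, 2 / 3],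
    ![1 / 5, 2 / 5, 2 / 5, 2 / 5, 3 / 5], ![1 / 6, 1 / 3, 1 / 2, 1 / 3, 2 / 3]]

theorem vertexQ_mem_polytopeQ (i : Fin 6) : vertexQ i ∈ polytopeQ := by
  fin_cases i <;>
    simp only [vertexQ, polytopeQ, Set.mem_ofPred_eq, Fin.reduceFinMk, Matrix.cons_val] <;> norm_num

theorem convex_polytopeQ : Convex ℝ polytopeQ := by
  rintro x ⟨hxe, hxf, hx₁, hx₂, hx₃, hx₄, hx₅, hx₆⟩ y ⟨hye, hyf, hy₁, hy₂, hy₃, hy₄, hy₅, hy₆⟩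
    a b ha hb hab
  simp only [polytopeQ, Set.mem_ofPred_eq, Pi.add_apply, Pi.smul_apply, smul_eq_mul]
  refine ⟨?_, ?_, ?_, ?_, ?_, ?_, ?_, ?_⟩
  · linear_combination a * hxe + b * hye + hab
  · linear_combination a * hxf + b * hyf + hab
  · linear_combination a * hx₁ + b * hy₁
  · linear_combination a * hx₂ + b * hy₂
  · linear_combination a * hx₃ + b * hy₃
  · linear_combination a * hx₄ + b * hy₄
  · linear_combination a * hx₅ + b * hy₅
  · linear_combination a * hx₆ + b * hy₆

section Triangulation

variable {v : Fin 5 → ℝ}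

theorem mem_convexHull_vertexQ_of_add_le (hv : v ∈ polytopeQ) (h : v 0 + v 1 ≤ v 4) :
    v ∈ convexHull ℝ (Set.range (vertexQ ∘ ![1, 3, 4, 5])) := by
  obtain ⟨he, hf, -, -, -, hfe₁, hfe₂, hfe₁₃⟩ := hv
  refine mem_convexHull_range_of_sum_mul_eq
    ![4 * (v 0 + v 2 - v 4), 3 * (2 * v 0 - v 3), 5 * (2 * v 1 - v 4), 6 * (v 4 - (v 0 + v 1))]
    ?nonneg ?sum_eq_one ?coord_eq
  case nonneg => simpa [Fin.forall_fin_succ, -tsub_le_iff_right] using ⟨hfe₁₃, hfe₁, hfe₂, h⟩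
  case sum_eq_one => simp only [Fin.sum_univ_four, Matrix.cons_val]; linarith
  case coord_eq =>
    intro j
    fin_cases j <;>
      simp only [Fin.sum_univ_four, Function.comp_apply, vertexQ, Fin.reduceFinMk,
        Matrix.cons_val] <;>
      linarith

theorem mem_convexHull_vertexQ_of_le_add_of_sub_le (hv : v ∈ polytopeQ) (h : v 4 ≤ v 0 + v 1)
    (h' : v 1 - v 0 ≤ v 4 - v 3) : v ∈ convexHull ℝ (Set.range (vertexQ ∘ ![0, 1, 3, 4])) := by
  obtain ⟨he, hf, he₁₂, he₂₃, -⟩ := hv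
  refine mem_convexHull_range_of_sum_mul_eq
    ![6 * (v 0 + v 1 - v 4), 4 * (v 2 - v 1), 3 * (v 4 - v 3 - (v 1 - v 0)), 5 * (v 1 - v 0)]
    ?nonneg ?sum_eq_one ?coord_eq
  case nonneg => simpa [Fin.forall_fin_succ, -tsub_le_iff_right] using ⟨h, he₂₃, h', he₁₂⟩
  case sum_eq_one => simp only [Fin.sum_univ_four, Matrix.cons_val]; linarith
  case coord_eq =>
    intro j
    fin_cases j <;>
      simp only [Fin.sum_univ_four, Function.comp_apply, vertexQ, Fin.reduceFinMk,
        Matrix.cons_val] <;>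
      linarith

theorem mem_convexHull_vertexQ_of_le_sub (hv : v ∈ polytopeQ) (h : v 4 - v 3 ≤ v 1 - v 0) :
    v ∈ convexHull ℝ (Set.range (vertexQ ∘ ![0, 1, 2, 4])) := by
  obtain ⟨he, hf, -, he₂₃, hf₁₂, hfe₁, -⟩ := hv
  refine mem_convexHull_range_of_sum_mul_eq
    ![6 * (2 * v 0 - v 3), 4 * (v 2 - v 1), 8 * (v 1 - v 0 - (v 4 - v 3)), 5 * (v 4 - v 3)]
    ?nonneg ?sum_eq_one ?coord_eq
  case nonneg => simpa [Fin.forall_fin_succ, -tsub_le_iff_right] using ⟨hfe₁, he₂₃, h, hf₁₂⟩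
  case sum_eq_one => simp only [Fin.sum_univ_four, Matrix.cons_val]; linarith
  case coord_eq =>
    intro j
    fin_cases j <;>
      simp only [Fin.sum_univ_four, Function.comp_apply, vertexQ, Fin.reduceFinMk,
        Matrix.cons_val] <;>
      linarith

end Triangulation

theorem polytopeQ_subset_convexHull_range_vertexQ :
    polytopeQ ⊆ convexHull ℝ (Set.range vertexQ) := by
  intro v hv
  have simplex_subset (i : Fin 4 → Fin 6) :
      convexHull ℝ (Set.range (vertexQ ∘ i)) ⊆ convexHull ℝ (Set.range vertexQ) :=
    convexHull_mono (Set.range_comp_subset_range i vertexQ)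
  rcases le_total (v 0 + v 1) (v 4) with h | h
  · exact simplex_subset _ (mem_convexHull_vertexQ_of_add_le hv h)
  rcases le_total (v 1 - v 0) (v 4 - v 3) with h' | h'
  · exact simplex_subset _ (mem_convexHull_vertexQ_of_le_add_of_sub_le hv h h')
  · exact simplex_subset _ (mem_convexHull_vertexQ_of_le_sub hv h')

theorem polytopeQ_eq_convexHull_range_vertexQ :
    polytopeQ = convexHull ℝ (Set.range vertexQ) :=
  polytopeQ_subset_convexHull_range_vertexQ.antisymm <|
    convexHull_min (Set.range_subset_iff.mpr vertexQ_mem_polytopeQ) convex_polytopeQ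

/-- `𝒬` is the convex hull of its six vertices. -/
theorem stmt10 :
    polytopeQ = convexHull ℝ
      {![(1:ℝ)/3, 1/3, 1/3, 1/2, 1/2], ![1/4, 1/4, 1/2, 1/2, 1/2],
        ![1/4, 3/8, 3/8, 1/2, 1/2], ![1/3, 1/3, 1/3, 1/3, 2/3],
        ![1/5, 2/5, 2/5, 2/5, 3/5], ![1/6, 1/3, 1/2, 1/3, 2/3]} := by
  rw [polytopeQ_eq_convexHull_range_vertexQ]
  congr 1
  simp only [vertexQ, Matrix.range_cons, Matrix.range_empty, Set.union_empty, Set.singleton_union]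
end

section
/- Define 𝒬 ⊂ ℝ⁵ as the set of quintuples (e₁, e₂, e₃, f₁, f₂) satisfying e₁ + e₂ + e₃ = 1, f₁ + f₂ = 1, e₁ ≤ e₂ ≤ e₃, f₁ ≤ f₂, f₁ ≤ 2e₁, f₂ ≤ 2e₂, and f₂ ≤ e₁ + e₃. Then the image of 𝒬 under the projection (e₁, e₂, e₃, f₁, f₂) ↦ (e₁, e₂, e₃) equals the polytope 𝒫₄ = { (x₁, x₂, x₃) ∈ ℝ³ : x₁ + x₂ + x₃ = 1, 0 ≤ x₁ ≤ x₂ ≤ x₃, x₂ ≤ 2x₁, x₃ ≤ x₁ + x₂ }. -/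
/-- The polytope `𝒫₄` of normalized scrollar invariants of primitive tetragonal covers. -/
def polytopeP4 : Set (Fin 3 → ℝ) :=
  {x | x 0 + x 1 + x 2 = 1 ∧ 0 ≤ x 0 ∧ x 0 ≤ x 1 ∧ x 1 ≤ x 2 ∧
       x 1 ≤ 2 * x 0 ∧ x 2 ≤ x 0 + x 1}

/-!
Over a point `(e₁, e₂, e₃)` with `e₁ + e₂ + e₃ = 1` and `e₁ ≤ e₂ ≤ e₃`, the equation `f₁ + f₂ = 1`
turns the remaining constraints of `𝒬` into two lower and two upper bounds on `f₂`, so the point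
lifts exactly when each lower bound is at most each upper bound. Of these four inequalities,
`1 - 2 * e₁ ≤ e₁ + e₃` says `e₂ ≤ 2 * e₁` and `1 - 2 * e₁ ≤ 2 * e₂` says `e₃ ≤ e₁ + e₂`; together
with the ordering these two imply the other two, as well as `0 ≤ e₁`.
-/

open Set

section LiftInterval

variable {𝕜 : Type*} [Field 𝕜] [LinearOrder 𝕜] [IsStrictOrderedRing 𝕜] {a b c : 𝕜}

/-- The interval of values `f₂` for which `(a, b, c, 1 - f₂, f₂)` satisfies the inequalities of `𝒬`
involving `f₁` or `f₂`. The lower bounds `1 / 2` and `1 - 2 * a` encode `f₁ ≤ f₂` and `f₁ ≤ 2 * a`;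
the interval may be empty. -/
def liftInterval (a b c : 𝕜) : Set 𝕜 :=
  Icc (max (1 / 2) (1 - 2 * a)) (min (2 * b) (a + c))

theorem mem_liftInterval_iff {f₁ f₂ : 𝕜} (hf : f₁ + f₂ = 1) :
    f₂ ∈ liftInterval a b c ↔ f₁ ≤ f₂ ∧ f₁ ≤ 2 * a ∧ f₂ ≤ 2 * b ∧ f₂ ≤ a + c := by
  have half_le_iff : 1 / 2 ≤ f₂ ↔ f₁ ≤ f₂ := by constructor <;> intro h <;> linarith
  have sub_le_iff : 1 - 2 * a ≤ f₂ ↔ f₁ ≤ 2 * a := by constructor <;> intro h <;> linarith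
  rw [liftInterval, mem_Icc, max_le_iff, le_min_iff, half_le_iff, sub_le_iff, and_assoc]

theorem liftInterval_nonempty_iff (hsum : a + b + c = 1) (hab : a ≤ b) (hbc : b ≤ c) :
    (liftInterval a b c).Nonempty ↔ b ≤ 2 * a ∧ c ≤ a + b := by
  rw [liftInterval, nonempty_Icc, max_le_iff, le_min_iff, le_min_iff]
  constructor
  · rintro ⟨-, sub_le_two_mul, sub_le_add⟩
    exact ⟨by linarith, by linarith⟩
  · rintro ⟨hba, hcab⟩
    have ha : 0 ≤ a := by linarith
    have half_le_two_mul : 1 / 2 ≤ 2 * b := by linarith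
    have half_le_add : 1 / 2 ≤ a + c := by linarith [hbc.trans (le_add_of_nonneg_left ha)]
    have sub_le_two_mul : 1 - 2 * a ≤ 2 * b := by linarith
    have sub_le_add : 1 - 2 * a ≤ a + c := by linarith
    exact ⟨⟨half_le_two_mul, half_le_add⟩, sub_le_two_mul, sub_le_add⟩

end LiftInterval

theorem mem_polytopeQ_iff {v : Fin 5 → ℝ} :
    v ∈ polytopeQ ↔ (v 0 + v 1 + v 2 = 1 ∧ v 0 ≤ v 1 ∧ v 1 ≤ v 2) ∧
      v 3 + v 4 = 1 ∧ v 4 ∈ liftInterval (v 0) (v 1) (v 2) := by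
  rw [and_congr_right mem_liftInterval_iff, polytopeQ, mem_ofPred_eq]
  tauto

theorem mem_image_polytopeQ_iff {x : Fin 3 → ℝ} :
    x ∈ (fun v : Fin 5 → ℝ => ![v 0, v 1, v 2]) '' polytopeQ ↔
      (x 0 + x 1 + x 2 = 1 ∧ x 0 ≤ x 1 ∧ x 1 ≤ x 2) ∧
        (liftInterval (x 0) (x 1) (x 2)).Nonempty := by
  constructor
  · rintro ⟨v, hv, rfl⟩
    obtain ⟨hbase, -, hlift⟩ := mem_polytopeQ_iff.mp hv
    exact ⟨hbase, v 4, hlift⟩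
  · rintro ⟨hbase, f₂, hf₂⟩
    refine ⟨![x 0, x 1, x 2, 1 - f₂, f₂], ?_, ?_⟩
    · exact mem_polytopeQ_iff.mpr ⟨hbase, sub_add_cancel 1 f₂, hf₂⟩
    · ext i
      fin_cases i <;> rfl

theorem mem_polytopeP4_iff {x : Fin 3 → ℝ} :
    x ∈ polytopeP4 ↔ (x 0 + x 1 + x 2 = 1 ∧ x 0 ≤ x 1 ∧ x 1 ≤ x 2) ∧
      x 1 ≤ 2 * x 0 ∧ x 2 ≤ x 0 + x 1 := by
  constructor
  · rintro ⟨hsum, -, h01, h12, hdouble, htriangle⟩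
    exact ⟨⟨hsum, h01, h12⟩, hdouble, htriangle⟩
  · rintro ⟨⟨hsum, h01, h12⟩, hdouble, htriangle⟩
    have nonneg : 0 ≤ x 0 := by linarith
    exact ⟨hsum, nonneg, h01, h12, hdouble, htriangle⟩

/-- The projection of `𝒬` to the first three coordinates is `𝒫₄`. -/
theorem stmt11 :
    (fun v : Fin 5 → ℝ => ![v 0, v 1, v 2]) '' polytopeQ = polytopeP4 := by
  ext x
  rw [mem_image_polytopeQ_iff, mem_polytopeP4_iff]
  exact and_congr_right fun ⟨hsum, h01, h12⟩ => liftInterval_nonempty_iff hsum h01 h12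
end

section
/- Let K ⊆ L be a finite extension of fields and let x₁, x₂ ∈ L. Let A be the K-linear span of {1, x₁} and B the K-linear span of {1, x₁, x₂}. Assume dim_K(A) = 2, dim_K(B) = 3, and that A is closed under multiplication (a·a′ ∈ A for all a, a′ ∈ A). Then the K-dimension of AB (the K-span of {ab : a ∈ A, b ∈ B}) is even and at least 4. -/
open Module

/-!
A finite-dimensional domain `A` over a field `K` is a division ring. Since `A * B` is the `A`-span
of `B`, it is an `A`-vector space, so by the tower law its dimension over `K` is a multiple of
`dim_K A = 2`. It contains `B`, of dimension `3`, and an even number that is at least `3` is at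
least `4`.
-/

theorem restrictScalars_span_eq_toSubmodule_smul {R S M : Type*} [CommSemiring R] [Semiring S]
    [Algebra R S] [AddCommMonoid M] [Module R M] [Module S M] [IsScalarTower R S M]
    (A : Subalgebra R S) (N : Submodule R M) :
    (Submodule.span A (N : Set M)).restrictScalars R = Subalgebra.toSubmodule A • N := by
  apply le_antisymm
  · intro x hx
    induction hx using Submodule.closure_induction with
    | zero => exact zero_mem _
    | add x y _ _ hx hy => exact add_mem hx hy
    | smul_mem a n hn => exact Submodule.smul_mem_smul a.2 hn
  · exact Submodule.smul_le.2 fun a ha n hn ↦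
      Submodule.smul_mem _ (⟨a, ha⟩ : A) (Submodule.subset_span hn)

section Span

variable {K M : Type*} (D : Type*) [Semiring K] [Semiring D] [AddCommMonoid M]
  [Module K D] [Module K M] [Module D M] [IsScalarTower K D M]

theorem fg_span_of_fg {N : Submodule K M} (hN : N.FG) :
    (Submodule.span D (N : Set M)).FG := by
  obtain ⟨s, rfl⟩ := hN
  exact ⟨s, (Submodule.span_span_of_tower K D _).symm⟩

theorem finrank_le_finrank_span [StrongRankCondition K] [Module.Finite K D]
    (N : Submodule K M) [Module.Finite K N] :
    finrank K N ≤ finrank K (Submodule.span D (N : Set M)) := by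
  let W : Submodule K M := (Submodule.span D (N : Set M)).restrictScalars K
  have hNW : N ≤ W := Submodule.subset_span
  have : Module.Finite K W := .of_fg (fg_span_of_fg D .of_finite).restrictScalars
  exact Submodule.finrank_mono hNW

end Span

theorem finrank_dvd_finrank_of_isDomain (K D V : Type*) [Field K] [Ring D] [IsDomain D]
    [Algebra K D] [FiniteDimensional K D] [AddCommGroup V] [Module K V] [Module D V]
    [IsScalarTower K D V] : finrank K D ∣ finrank K V := by
  let := divisionRingOfFiniteDimensional K D
  exact finrank_dvd_finrank_right K D V

theorem stmt13_general {K L M : Type*} [Field K] [Ring L] [Algebra K L] [AddCommGroup M]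
    [Module K M] [Module L M] [IsScalarTower K L M]
    (A : Subalgebra K L) [IsDomain A] [FiniteDimensional K A]
    (B : Submodule K M) [FiniteDimensional K B] :
    finrank K A ∣ finrank K (Subalgebra.toSubmodule A • B : Submodule K M) ∧
      finrank K B ≤ finrank K (Subalgebra.toSubmodule A • B : Submodule K M) := by
  rw [← restrictScalars_span_eq_toSubmodule_smul]
  exact ⟨finrank_dvd_finrank_of_isDomain K A (Submodule.span A (B : Set M)),
    finrank_le_finrank_span A B⟩

/-- If `A = span {1, x₁}` is a two-dimensional `K`-subalgebra of a finite extension `L/K`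
and `B = span {1, x₁, x₂}` is three-dimensional, then `dim_K (A·B)` is even and `≥ 4`. -/
theorem stmt13 {K L : Type*} [Field K] [Field L] [Algebra K L] [FiniteDimensional K L]
    (x₁ x₂ : L)
    (A : Submodule K L) (hA : A = Submodule.span K {1, x₁})
    (B : Submodule K L) (hB : B = Submodule.span K {1, x₁, x₂})
    (hdimA : finrank K A = 2) (hdimB : finrank K B = 3)
    (hmul : ∀ a ∈ A, ∀ a' ∈ A, a * a' ∈ A) :
    Even (finrank K (A * B : Submodule K L)) ∧
      4 ≤ finrank K (A * B : Submodule K L) := by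
  have hone : 1 ∈ A := hA ▸ Submodule.subset_span (by simp)
  obtain ⟨hdvd, hle⟩ : 2 ∣ finrank K ↥(A * B) ∧ 3 ≤ finrank K ↥(A * B) :=
    hdimA ▸ hdimB ▸ stmt13_general (A.toSubalgebra hone fun a b ha hb ↦ hmul a ha b hb) B
  exact ⟨even_iff_two_dvd.2 hdvd, by omega⟩
end

section
/- Let K ⊆ L be a finite extension of fields of characteristic zero of degree d ≥ 2, and assume the extension has no proper intermediate fields: every intermediate field F with K ⊆ F ⊆ L satisfies F = K or F = L. Let x₀ = 1, x₁, …, x_{d−1} be a K-basis of L. Then for all i, j ≥ 1 with i + j ≤ d − 1, the K-linear span of the products { x_a · x_b : 0 ≤ a ≤ i, 0 ≤ b ≤ j } is NOT contained in the K-linear span of { x₀, x₁, …, x_{i+j−1} }. -/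
open Module

/-!
The proof is the subspace analogue of the Cauchy–Davenport theorem: if `L/K` has no proper finite
intermediate fields, then nonzero finite-dimensional `K`-subspaces `A`, `B` of `L` with `A * B ≠ ⊤`
satisfy `dim A + dim B ≤ dim (A * B) + 1`.

For `e ≠ 0`, replacing `(A, B)` by `(A + e B, B ∩ e⁻¹ A)` preserves `dim A + dim B` and does not
enlarge `A * B`. If for some quotient `e = a / b` of nonzero elements of `A` and `B` this makes `B`
smaller, induct on `dim B`. Otherwise every quotient of elements of `B` multiplies `A` into itself.
The elements with this property form a finite intermediate field, which is either `K`, forcing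
`dim B = 1`, or `L`, forcing `A = ⊤`.

For initial segments of a linearly independent family the dimensions are `i + 1` and `j + 1`, so
the product space has dimension at least `i + j + 1` and cannot lie in a space of dimension
`i + j`.
-/

section Multipliers

section CommSemiring

variable {R S : Type*} [CommSemiring R] [CommSemiring S] [Algebra R S]

/-- The multiplier algebra of a submodule `A` of a commutative algebra: the subalgebra of all `x`
with `x A ⊆ A`. -/
def multiplierSubalgebra (A : Submodule R S) : Subalgebra R S :=
  (A / A).toSubalgebra (Submodule.one_mem_div.mpr le_rfl) fun x y hx hy a ha ↦ by
    rw [mul_assoc]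
    exact hx _ (hy a ha)

theorem mem_multiplierSubalgebra {A : Submodule R S} {x : S} :
    x ∈ multiplierSubalgebra A ↔ ∀ a ∈ A, x * a ∈ A :=
  Iff.rfl

end CommSemiring

theorem eq_top_of_multiplierSubalgebra_eq_top {R L : Type*} [CommSemiring R] [Semifield L]
    [Algebra R L] {A : Submodule R L} (hA : A ≠ ⊥) (h : multiplierSubalgebra A = ⊤) :
    A = ⊤ := by
  obtain ⟨a, ha, ha0⟩ := A.ne_bot_iff.mp hA
  refine eq_top_iff.mpr fun x _ ↦ ?_
  have hx : x / a ∈ multiplierSubalgebra A := h ▸ Algebra.mem_top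
  simpa only [div_mul_cancel₀ x ha0] using hx a ha

theorem finite_multiplierSubalgebra {R S : Type*} [CommRing R] [CommRing S] [NoZeroDivisors S]
    [Algebra R S] {A : Submodule R S} [IsNoetherian R A] (hA : A ≠ ⊥) :
    Module.Finite R (multiplierSubalgebra A) := by
  obtain ⟨a, ha, ha0⟩ := A.ne_bot_iff.mp hA
  let mulRight : multiplierSubalgebra A →ₗ[R] A :=
    ((LinearMap.mulRight R a).domRestrict (multiplierSubalgebra A).toSubmodule).codRestrict A
      fun x ↦ x.2 a ha
  refine Module.Finite.of_injective mulRight fun x y hxy ↦ Subtype.ext ?_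
  exact mul_right_cancel₀ ha0 (congrArg Subtype.val hxy)

theorem subalgebra_eq_bot_or_eq_top_of_finiteDimensional {K L : Type*} [Field K] [Field L]
    [Algebra K L]
    (hprim : ∀ F : IntermediateField K L, FiniteDimensional K F → F = ⊥ ∨ F = ⊤)
    (S : Subalgebra K L) [FiniteDimensional K S] : S = ⊥ ∨ S = ⊤ := by
  let F : IntermediateField K L := S.toIntermediateField' (IsField.of_isDomain_of_finite K S)
  have hFS : F.toSubalgebra = S := toSubalgebra_toIntermediateField' S _
  rcases hprim F ‹FiniteDimensional K S› with hF | hF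
  · exact .inl (by rw [← hFS, hF, IntermediateField.bot_toSubalgebra])
  · exact .inr (by rw [← hFS, hF, IntermediateField.top_toSubalgebra])

end Multipliers

section DysonTransform

open scoped Pointwise

theorem finrank_smul_submodule_s14 {G R M : Type*} [GroupWithZero G] [Semiring R] [AddCommMonoid M]
    [Module R M] [DistribMulAction G M] [SMulCommClass G R M] {e : G} (he : e ≠ 0)
    (A : Submodule R M) : finrank R ↥(e • A) = finrank R A :=
  (Submodule.equivMapOfInjective (DistribSMul.toLinearMap R M e) (MulAction.injective₀ he)
    A).finrank_eq.symm

section Semifield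

variable {R L : Type*} [CommSemiring R] [Semifield L] [Algebra R L]

/-- The first component `A + e B` of the Dyson `e`-transform of a pair of submodules, the linear
counterpart of `Finset.mulDysonETransform`. -/
def dysonSup (e : L) (A B : Submodule R L) : Submodule R L :=
  A ⊔ e • B

/-- The second component `B ∩ e⁻¹ A` of the Dyson `e`-transform of a pair of submodules, the linear
counterpart of `Finset.mulDysonETransform`. -/
def dysonInf (e : L) (A B : Submodule R L) : Submodule R L :=
  B ⊓ e⁻¹ • A

variable {e : L} {A B : Submodule R L}

theorem le_dysonSup : A ≤ dysonSup e A B :=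
  le_sup_left

theorem dysonInf_le : dysonInf e A B ≤ B :=
  inf_le_left

theorem mem_dysonInf {x : L} (he : e ≠ 0) : x ∈ dysonInf e A B ↔ x ∈ B ∧ e * x ∈ A := by
  rw [dysonInf, Submodule.mem_inf, Submodule.mem_smul_iff_inv_mul_mem (inv_ne_zero he), inv_inv]

theorem smul_dysonInf (he : e ≠ 0) : e • dysonInf e A B = A ⊓ e • B := by
  ext x
  rw [Submodule.mem_smul_iff_inv_mul_mem he, mem_dysonInf he, mul_inv_cancel_left₀ he,
    Submodule.mem_inf, Submodule.mem_smul_iff_inv_mul_mem he, and_comm]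

theorem dysonInf_div_ne_bot {a b : L} (ha : a ∈ A) (ha0 : a ≠ 0) (hb : b ∈ B) (hb0 : b ≠ 0) :
    dysonInf (a / b) A B ≠ ⊥ := by
  refine (Submodule.ne_bot_iff _).mpr ⟨b, (mem_dysonInf (div_ne_zero ha0 hb0)).mpr ⟨hb, ?_⟩, hb0⟩
  rwa [div_mul_cancel₀ a hb0]

theorem dysonSup_mul_dysonInf_le (he : e ≠ 0) : dysonSup e A B * dysonInf e A B ≤ A * B := by
  rw [dysonSup, dysonInf, Submodule.sup_mul]
  refine sup_le (mul_le_mul_right inf_le_left A) ?_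
  calc e • B * (B ⊓ e⁻¹ • A) ≤ e • B * e⁻¹ • A := mul_le_mul_right inf_le_right _
    _ = A * B := by rw [smul_mul_smul_comm, mul_inv_cancel₀ he, one_smul, mul_comm]

theorem div_mem_multiplierSubalgebra
    (hstable : ∀ a ∈ A, a ≠ 0 → ∀ b ∈ B, b ≠ 0 → dysonInf (a / b) A B = B)
    {b c : L} (hb : b ∈ B) (hb0 : b ≠ 0) (hc : c ∈ B) : c / b ∈ multiplierSubalgebra A := by
  refine mem_multiplierSubalgebra.mpr fun a ha ↦ ?_
  rcases eq_or_ne a 0 with rfl | ha0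
  · simp only [mul_zero, zero_mem]
  · have hc' : c ∈ dysonInf (a / b) A B := (hstable a ha ha0 b hb hb0).symm ▸ hc
    rw [div_mul_comm]
    exact ((mem_dysonInf (div_ne_zero ha0 hb0)).mp hc').2

end Semifield

variable {K L : Type*} [Field K] [Field L] [Algebra K L] {e : L} {A B : Submodule K L}

instance finiteDimensional_dysonSup [FiniteDimensional K A] [FiniteDimensional K B] :
    FiniteDimensional K (dysonSup e A B) :=
  have : FiniteDimensional K ↥(e • B) := Module.Finite.map B _
  Submodule.finite_sup A (e • B)

instance finiteDimensional_dysonInf [FiniteDimensional K B] :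
    FiniteDimensional K (dysonInf e A B) :=
  Submodule.finiteDimensional_of_le dysonInf_le

theorem finrank_dysonSup_add_finrank_dysonInf [FiniteDimensional K A] [FiniteDimensional K B]
    (he : e ≠ 0) :
    finrank K (dysonSup e A B) + finrank K (dysonInf e A B) = finrank K A + finrank K B := by
  have : FiniteDimensional K ↥(e • B) := Module.Finite.map B _
  rw [← finrank_smul_submodule_s14 he (dysonInf e A B), smul_dysonInf he, dysonSup,
    Submodule.finrank_sup_add_finrank_inf_eq, finrank_smul_submodule_s14 he]

end DysonTransform

section CauchyDavenport

open scoped Pointwise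

theorem top_mul_eq_top_of_ne_bot {R L : Type*} [CommSemiring R] [DivisionSemiring L] [Algebra R L]
    {B : Submodule R L} (hB : B ≠ ⊥) : ⊤ * B = ⊤ := by
  obtain ⟨b, hb, hb0⟩ := B.ne_bot_iff.mp hB
  refine eq_top_iff.mpr fun x _ ↦ ?_
  simpa only [div_mul_cancel₀ x hb0] using Submodule.mul_mem_mul (Submodule.mem_top (x := x / b)) hb

variable {K L : Type*} [Field K] [Field L] [Algebra K L] {A B : Submodule K L}

theorem finrank_le_one_of_div_mem_bot {b : L} (hb0 : b ≠ 0)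
    (h : ∀ c ∈ B, c / b ∈ (⊥ : Subalgebra K L)) : finrank K B ≤ 1 := by
  have hB : B ≤ K ∙ b := fun c hc ↦ by
    obtain ⟨r, hr⟩ := Algebra.mem_bot.mp (h c hc)
    exact Submodule.mem_span_singleton.mpr ⟨r, by rw [Algebra.smul_def, hr, div_mul_cancel₀ c hb0]⟩
  exact (Submodule.finrank_mono hB).trans (finrank_span_singleton hb0).le

instance finiteDimensional_mul [FiniteDimensional K A] [FiniteDimensional K B] :
    FiniteDimensional K ↥(A * B) :=
  .of_fg ((Submodule.FG.of_finite (N := A)).mul (Submodule.FG.of_finite (N := B)))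

theorem finrank_le_finrank_mul [FiniteDimensional K A] [FiniteDimensional K B] (hB : B ≠ ⊥) :
    finrank K A ≤ finrank K ↥(A * B) := by
  obtain ⟨b, hb, hb0⟩ := B.ne_bot_iff.mp hB
  have hbA : b • A ≤ A * B := by
    rw [← Submodule.span_singleton_mul, mul_comm]
    exact mul_le_mul_right ((Submodule.span_singleton_le_iff_mem b B).mpr hb) A
  calc finrank K A = finrank K ↥(b • A) := (finrank_smul_submodule_s14 hb0 A).symm
    _ ≤ finrank K ↥(A * B) := Submodule.finrank_mono hbA

theorem finrank_add_finrank_le_of_dysonInf_eq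
    (hprim : ∀ F : IntermediateField K L, FiniteDimensional K F → F = ⊥ ∨ F = ⊤)
    [FiniteDimensional K A] [FiniteDimensional K B] (hA : A ≠ ⊥) (hB : B ≠ ⊥) (hAB : A * B ≠ ⊤)
    (hstable : ∀ a ∈ A, a ≠ 0 → ∀ b ∈ B, b ≠ 0 → dysonInf (a / b) A B = B) :
    finrank K A + finrank K B ≤ finrank K ↥(A * B) + 1 := by
  have := finite_multiplierSubalgebra hA
  rcases subalgebra_eq_bot_or_eq_top_of_finiteDimensional hprim (multiplierSubalgebra A)
    with hbot | htop
  · obtain ⟨b, hb, hb0⟩ := B.ne_bot_iff.mp hB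
    exact add_le_add (finrank_le_finrank_mul hB) <| finrank_le_one_of_div_mem_bot hb0
      fun c hc ↦ hbot ▸ div_mem_multiplierSubalgebra hstable hb hb0 hc
  · refine absurd ?_ hAB
    rw [eq_top_of_multiplierSubalgebra_eq_top hA htop, top_mul_eq_top_of_ne_bot hB]

theorem finrank_add_finrank_le_finrank_mul_add_one
    (hprim : ∀ F : IntermediateField K L, FiniteDimensional K F → F = ⊥ ∨ F = ⊤)
    [FiniteDimensional K A] [FiniteDimensional K B] (hA : A ≠ ⊥) (hB : B ≠ ⊥) (hAB : A * B ≠ ⊤) :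
    finrank K A + finrank K B ≤ finrank K ↥(A * B) + 1 := by
  induction hn : finrank K B using Nat.strong_induction_on generalizing A B with
  | _ n ih =>
  subst hn
  by_cases hstable : ∀ a ∈ A, a ≠ 0 → ∀ b ∈ B, b ≠ 0 → dysonInf (a / b) A B = B
  · exact finrank_add_finrank_le_of_dysonInf_eq hprim hA hB hAB hstable
  push Not at hstable
  obtain ⟨a, ha, ha0, b, hb, hb0, hne⟩ := hstable
  have he : a / b ≠ 0 := div_ne_zero ha0 hb0
  have hlt : finrank K (dysonInf (a / b) A B) < finrank K B :=
    Submodule.finrank_lt_finrank_of_lt (dysonInf_le.lt_of_ne hne)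
  have hmul : dysonSup (a / b) A B * dysonInf (a / b) A B ≤ A * B := dysonSup_mul_dysonInf_le he
  calc finrank K A + finrank K B
      = finrank K (dysonSup (a / b) A B) + finrank K (dysonInf (a / b) A B) :=
        (finrank_dysonSup_add_finrank_dysonInf he).symm
    _ ≤ finrank K ↥(dysonSup (a / b) A B * dysonInf (a / b) A B) + 1 :=
        ih _ hlt (ne_bot_of_le_ne_bot hA le_dysonSup) (dysonInf_div_ne_bot ha ha0 hb hb0)
          (ne_top_of_le_ne_top hAB hmul) rfl
    _ ≤ finrank K ↥(A * B) + 1 := Nat.add_le_add_right (Submodule.finrank_mono hmul) 1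

end CauchyDavenport

theorem finrank_span_image_val_lt {R M : Type*} [Semiring R] [StrongRankCondition R]
    [AddCommMonoid M] [Module R M] {n m : ℕ} {v : Fin n → M} (hv : LinearIndependent R v)
    (hm : m ≤ n) :
    finrank R (Submodule.span R (v '' {a | (a : ℕ) < m})) = m := by
  have : Nontrivial R := nontrivial_of_invariantBasisNumber R
  rw [← Fin.range_castLE hm, ← Set.range_comp,
    finrank_span_eq_card (hv.comp _ (Fin.castLE_injective hm)), Fintype.card_fin]

theorem stmt14_general {K L : Type*} [Field K] [Field L] [Algebra K L]
    (hprim : ∀ F : IntermediateField K L, FiniteDimensional K F → F = ⊥ ∨ F = ⊤)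
    {n : ℕ} {v : Fin n → L} (hv : LinearIndependent K v) {i j : ℕ} (hij : i + j < n) :
    ¬ (Submodule.span K
          {y : L | ∃ a b : Fin n, (a : ℕ) ≤ i ∧ (b : ℕ) ≤ j ∧ y = v a * v b} ≤
        Submodule.span K (v '' {a : Fin n | (a : ℕ) < i + j})) := by
  intro hle
  let V (m : ℕ) : Submodule K L := Submodule.span K (v '' {a : Fin n | (a : ℕ) < m})
  have hV : ∀ m ≤ n, finrank K (V m) = m := fun m ↦ finrank_span_image_val_lt hv
  have hfin (m : ℕ) : FiniteDimensional K (V m) :=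
    FiniteDimensional.span_of_finite K (Set.toFinite _)
  have hne_bot (m : ℕ) (hm : m < n) : V (m + 1) ≠ ⊥ :=
    Submodule.one_le_finrank_iff.mp (by rw [hV _ hm]; exact Nat.le_add_left 1 m)
  have hmul : V (i + 1) * V (j + 1) ≤ V (i + j) := by
    rw [Submodule.span_mul_span]
    refine (Submodule.span_mono ?_).trans hle
    rintro _ ⟨_, ⟨a, ha, rfl⟩, _, ⟨b, hb, rfl⟩, rfl⟩
    exact ⟨a, b, Nat.le_of_lt_succ ha, Nat.le_of_lt_succ hb, rfl⟩
  have hne_top : V (i + j) ≠ ⊤ := fun htop ↦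
    hv.notMem_span_image (x := ⟨i + j, hij⟩) (lt_irrefl (i + j)) (htop ▸ Submodule.mem_top)
  have hdim := finrank_add_finrank_le_finrank_mul_add_one hprim (hne_bot i (by lia))
    (hne_bot j (by lia)) (ne_top_of_le_ne_top hne_top hmul)
  have hle_dim := Submodule.finrank_mono hmul
  rw [hV _ (by lia)] at hle_dim
  rw [hV _ (by lia), hV _ (by lia)] at hdim
  lia

/-- For a primitive finite extension `L/K` of degree `d` in characteristic zero and a
`K`-basis `1 = v₀, v₁, …, v_{d-1}` of `L`, the span of the products `v_a · v_b` with
`a ≤ i`, `b ≤ j` (where `i, j ≥ 1`, `i + j ≤ d - 1`) is never contained in the span of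
`v₀, …, v_{i+j-1}`. -/
theorem stmt14 {K L : Type*} [Field K] [Field L] [Algebra K L] [CharZero K]
    [FiniteDimensional K L] (d : ℕ) (hd : 2 ≤ d) (hdim : finrank K L = d)
    (hprim : ∀ F : IntermediateField K L, F = ⊥ ∨ F = ⊤)
    (v : Basis (Fin d) K L) (hv0 : v ⟨0, by omega⟩ = 1) :
    ∀ i j : ℕ, 1 ≤ i → 1 ≤ j → i + j ≤ d - 1 →
      ¬ (Submodule.span K
            {y : L | ∃ a b : Fin d, (a : ℕ) ≤ i ∧ (b : ℕ) ≤ j ∧ y = v a * v b} ≤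
          Submodule.span K (v '' {a : Fin d | (a : ℕ) ≤ i + j - 1})) := by
  intro i j hi _ hij
  simpa only [Nat.le_sub_one_iff_lt (Nat.add_pos_left hi j)] using
    stmt14_general (fun F _ ↦ hprim F) v.linearIndependent (by lia : i + j < d)
end

section
/- Define 𝒬′ ⊂ ℝ⁵ as the set of quintuples (e₁, e₂, e₃, f₁, f₂) satisfying e₁ + e₂ + e₃ = 1, f₁ + f₂ = 1, e₁ ≤ e₂ ≤ e₃, f₁ ≤ f₂, f₁ ≤ 2e₁, and f₂ ≤ 2e₂. Then 𝒬′ equals the convex hull in ℝ⁵ of the five points (1/3, 1/3, 1/3, 1/2, 1/2), (1/4, 1/4, 1/2, 1/2, 1/2), (1/4, 3/8, 3/8, 1/2, 1/2), (1/3, 1/3, 1/3, 1/3, 2/3), and (0, 1/2, 1/2, 0, 1). -/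
/-- The polytope `𝒬′` of normalized invariants `(e₁, e₂, e₃, f₁, f₂)` of all
tetragonal covers. -/
def polytopeQ' : Set (Fin 5 → ℝ) :=
  {v | v 0 + v 1 + v 2 = 1 ∧ v 3 + v 4 = 1 ∧ v 0 ≤ v 1 ∧ v 1 ≤ v 2 ∧ v 3 ≤ v 4 ∧
       v 3 ≤ 2 * v 0 ∧ v 4 ≤ 2 * v 1}

/-!
With vertices `P₁, …, P₅` in the order of the theorem, the polytope is a pyramid with apex `P₂` over
the quadrilateral `P₁ P₃ P₅ P₄` cut out by `e₂ = e₃`. The diagonals `P₁P₅` and `P₃P₄` of the base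
meet, which is the relation `6 P₁ + P₅ = 4 P₃ + 3 P₄`; hence the weights expressing a point through
the five vertices form a line, parametrized by the weight `t` of `P₅`. The weights of
`P₁, P₃, P₄, P₅` are nonnegative exactly when `t` lies between `max 0 (2 (e₂ - e₁) - (2 e₂ - f₂))`
and `min (f₂ - f₁) (2 (e₂ - e₁))`, and the inequalities defining the polytope say precisely that
these bounds are compatible and that the weight of the apex is nonnegative.
-/

/-- The polytope `𝒬′` over an ordered ring `K`; `polytopeQ'` is the case `K = ℝ`. The coordinates
`0, 1, 2, 3, 4` are `e₁, e₂, e₃, f₁, f₂`. -/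
def tetragonalPolytope (K : Type*) [Semiring K] [LE K] : Set (Fin 5 → K) :=
  {v | v 0 + v 1 + v 2 = 1 ∧ v 3 + v 4 = 1 ∧ v 0 ≤ v 1 ∧ v 1 ≤ v 2 ∧ v 3 ≤ v 4 ∧
       v 3 ≤ 2 * v 0 ∧ v 4 ≤ 2 * v 1}

namespace tetragonalPolytope

/-- The five vertices `P₁, …, P₅` of `𝒬′`, indexed from `0`. -/
def vertex (K : Type*) [DivisionRing K] : Fin 5 → Fin 5 → K :=
  ![![1 / 3, 1 / 3, 1 / 3, 1 / 2, 1 / 2], ![1 / 4, 1 / 4, 1 / 2, 1 / 2, 1 / 2],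
    ![1 / 4, 3 / 8, 3 / 8, 1 / 2, 1 / 2], ![1 / 3, 1 / 3, 1 / 3, 1 / 3, 2 / 3],
    ![0, 1 / 2, 1 / 2, 0, 1]]

/-- The weights expressing `v` through the vertices of `𝒬′` and giving weight `t` to the last
one. -/
def weight {K : Type*} [Ring K] (v : Fin 5 → K) (t : K) : Fin 5 → K :=
  ![6 * (t - (2 * (v 1 - v 0) - (2 * v 1 - v 4))), 4 * (v 2 - v 1), 4 * (2 * (v 1 - v 0) - t),
    3 * (v 4 - v 3 - t), t]

theorem range_vertex (K : Type*) [DivisionRing K] :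
    Set.range (vertex K) =
      {![1 / 3, 1 / 3, 1 / 3, 1 / 2, 1 / 2], ![1 / 4, 1 / 4, 1 / 2, 1 / 2, 1 / 2],
        ![1 / 4, 3 / 8, 3 / 8, 1 / 2, 1 / 2], ![1 / 3, 1 / 3, 1 / 3, 1 / 3, 2 / 3],
        ![0, 1 / 2, 1 / 2, 0, 1]} := by
  simp only [vertex, Matrix.range_cons, Matrix.range_empty, Set.union_empty, Set.singleton_union]

theorem sum_weight {K : Type*} [CommRing K] {v : Fin 5 → K} (he : v 0 + v 1 + v 2 = 1)
    (hf : v 3 + v 4 = 1) (t : K) : ∑ i, weight v t i = 1 := by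
  simp only [weight, Fin.sum_univ_five, Matrix.cons_val]
  linear_combination 4 * he - 3 * hf

theorem sum_weight_smul_vertex {K : Type*} [Field K] [CharZero K] {v : Fin 5 → K}
    (he : v 0 + v 1 + v 2 = 1) (hf : v 3 + v 4 = 1) (t : K) :
    ∑ i, weight v t i • vertex K i = v := by
  ext j
  simp only [weight, vertex, Fin.sum_univ_five, Matrix.cons_val, Pi.add_apply, Pi.smul_apply,
    smul_eq_mul]
  fin_cases j <;> simp only [Fin.reduceFinMk, Fin.zero_eta, Fin.mk_one, Matrix.cons_val]
  · linear_combination he - hf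
  · linear_combination he - hf
  · linear_combination he - hf
  · linear_combination 2 * he - 2 * hf
  · linear_combination 2 * he - 2 * hf

theorem exists_weight_nonneg {K : Type*} [CommRing K] [LinearOrder K] [IsStrictOrderedRing K]
    {v : Fin 5 → K} (hv : v ∈ tetragonalPolytope K) :
    ∃ t, ∀ i, 0 ≤ weight v t i := by
  obtain ⟨-, -, he₀₁, he₁₂, hf₃₄, hfe₀, hfe₁⟩ := hv
  obtain ⟨t, ⟨ht₀, hlower⟩, hbase, hupper⟩ :
      ∃ t, (0 ≤ t ∧ 2 * (v 1 - v 0) - (2 * v 1 - v 4) ≤ t) ∧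
        t ≤ v 4 - v 3 ∧ t ≤ 2 * (v 1 - v 0) := by
    refine ⟨max 0 (2 * (v 1 - v 0) - (2 * v 1 - v 4)), ⟨le_max_left _ _, le_max_right _ _⟩,
      max_le ?_ ?_, max_le ?_ ?_⟩ <;> linarith
  refine ⟨t, fun i ↦ ?_⟩
  fin_cases i <;> simp only [weight, Fin.reduceFinMk, Fin.zero_eta, Fin.mk_one, Matrix.cons_val] <;>
    linarith

protected theorem convex (K : Type*) [CommRing K] [PartialOrder K] [IsOrderedRing K] :
    Convex K (tetragonalPolytope K) := by
  rintro x ⟨hx₁, hx₂, hx₃, hx₄, hx₅, hx₆, hx₇⟩ y ⟨hy₁, hy₂, hy₃, hy₄, hy₅, hy₆, hy₇⟩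
    a b ha hb hab
  simp only [tetragonalPolytope, Set.mem_ofPred_eq, Pi.add_apply, Pi.smul_apply, smul_eq_mul]
  refine ⟨?_, ?_, ?_, ?_, ?_, ?_, ?_⟩
  · linear_combination a * hx₁ + b * hy₁ + hab
  · linear_combination a * hx₂ + b * hy₂ + hab
  · linear_combination a * hx₃ + b * hy₃
  · linear_combination a * hx₄ + b * hy₄
  · linear_combination a * hx₅ + b * hy₅
  · linear_combination a * hx₆ + b * hy₆
  · linear_combination a * hx₇ + b * hy₇

variable (K : Type*) [Field K] [LinearOrder K] [IsStrictOrderedRing K]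

theorem vertex_mem (i : Fin 5) : vertex K i ∈ tetragonalPolytope K := by
  fin_cases i <;>
    simp only [vertex, tetragonalPolytope, Set.mem_ofPred_eq, Fin.reduceFinMk, Fin.zero_eta,
      Fin.mk_one, Matrix.cons_val] <;>
    norm_num

theorem eq_convexHull_range_vertex :
    tetragonalPolytope K = convexHull K (Set.range (vertex K)) := by
  refine Set.Subset.antisymm (fun v hv ↦ ?_)
    (convexHull_min (Set.range_subset_iff.2 (vertex_mem K)) (tetragonalPolytope.convex K))
  obtain ⟨t, ht⟩ := exists_weight_nonneg hv
  obtain ⟨he, hf, -⟩ := hv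
  exact mem_convexHull_of_exists_fintype (weight v t) (vertex K) ht (sum_weight he hf t)
    Set.mem_range_self (sum_weight_smul_vertex he hf t)

end tetragonalPolytope

theorem stmt15_general (K : Type*) [Field K] [LinearOrder K] [IsStrictOrderedRing K] :
    tetragonalPolytope K = convexHull K
      {![1 / 3, 1 / 3, 1 / 3, 1 / 2, 1 / 2], ![1 / 4, 1 / 4, 1 / 2, 1 / 2, 1 / 2],
        ![1 / 4, 3 / 8, 3 / 8, 1 / 2, 1 / 2], ![1 / 3, 1 / 3, 1 / 3, 1 / 3, 2 / 3],
        ![0, 1 / 2, 1 / 2, 0, 1]} := by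
  rw [tetragonalPolytope.eq_convexHull_range_vertex, tetragonalPolytope.range_vertex]

/-- `𝒬′` is the convex hull of its five vertices. -/
theorem stmt15 :
    polytopeQ' = convexHull ℝ
      {![(1:ℝ)/3, 1/3, 1/3, 1/2, 1/2], ![1/4, 1/4, 1/2, 1/2, 1/2],
        ![1/4, 3/8, 3/8, 1/2, 1/2], ![1/3, 1/3, 1/3, 1/3, 2/3],
        ![0, 1/2, 1/2, 0, 1]} :=
  stmt15_general ℝ
end
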